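/- Let X be one of the 23 Niemeier root systems, let π^X be its Coxeter Frame shape, let d^X be the number of irreducible components of X, and let Γ^X be the genus zero group attached to X. Then T^X = 1/η_{π^X} is the unique principal modulus for Γ^X satisfying T^X(τ) = q^{−1} − d^X + O(q) as τ → i∞. -/

import Mathlib

noncomputable section

open Topology MeasureTheory

/-- `e2 x = e^{2πix}`. -/
def e2 (x : ℂ) : ℂ := Complex.exp (2 * (Real.pi : ℂ) * Complex.I * x)

/-- The upper half-plane, viewed as a subset of `ℂ`. -/
def UHP : Set ℂ := {τ : ℂ | 0 < τ.im}
/-- The irreducible simply-laced (ADE) root systems; the natural number argument of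
`A`/`D` is the rank. -/
inductive ADE : Type
  | A : ℕ → ADE
  | D : ℕ → ADE
  | E6 : ADE
  | E7 : ADE
  | E8 : ADE
  deriving DecidableEq

namespace ADE

/-- Validity of the rank parameter: `A n` needs `n ≥ 1` and `D n` needs `n ≥ 4`. -/
def valid : ADE → Prop
  | A n => 1 ≤ n
  | D n => 4 ≤ n
  | _ => True

def isA : ADE → Bool | A _ => true | _ => false
def isD : ADE → Bool | D _ => true | _ => false
def isE6 : ADE → Bool | E6 => true | _ => false

def rank : ADE → ℕ
  | A n => n
  | D n => n
  | E6 => 6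
  | E7 => 7
  | E8 => 8

/-- The Coxeter number. -/
def cox : ADE → ℕ
  | A n => n + 1
  | D n => 2 * n - 2
  | E6 => 12
  | E7 => 18
  | E8 => 30

/-- The divisors `n_i` of the Coxeter number `m` such that `Ω^X = Σ_i Ω_m(n_i)`;
`Ω^{A_{m-1}} = Ω_m(1)`, `Ω^{D_{m/2+1}} = Ω_m(1) + Ω_m(m/2)`,
`Ω^{E6} = Ω_{12}(1)+Ω_{12}(4)+Ω_{12}(6)`, `Ω^{E7} = Ω_{18}(1)+Ω_{18}(6)+Ω_{18}(9)`,
`Ω^{E8} = Ω_{30}(1)+Ω_{30}(6)+Ω_{30}(10)+Ω_{30}(15)`. -/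
def omegaDivs (m : ℕ) : ADE → List ℕ
  | A _ => [1]
  | D _ => [1, m / 2]
  | E6 => [1, 4, 6]
  | E7 => [1, 6, 9]
  | E8 => [1, 6, 10, 15]

/-- The Coxeter Frame shape, as a list of pairs `(n_i, k_i)` standing for `∏ n_i^{k_i}`. -/
def frame : ADE → List (ℕ × ℤ)
  | A n => [(n + 1, 1), (1, -1)]
  | D n => [(2, 1), (2 * n - 2, 1), (1, -1), (n - 1, -1)]
  | E6 => [(2, 1), (3, 1), (12, 1), (1, -1), (4, -1), (6, -1)]
  | E7 => [(2, 1), (3, 1), (18, 1), (1, -1), (6, -1), (9, -1)]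
  | E8 => [(2, 1), (3, 1), (5, 1), (30, 1), (1, -1), (6, -1), (10, -1), (15, -1)]

end ADE

/-- The 23 Niemeier root systems, as unions (lists) of their irreducible components. -/
def NiemeierRootSystems : List (List ADE) :=
  [ List.replicate 24 (.A 1), List.replicate 12 (.A 2), List.replicate 8 (.A 3),
    List.replicate 6 (.A 4), [.A 5, .A 5, .A 5, .A 5, .D 4], List.replicate 4 (.A 6),
    [.A 7, .A 7, .D 5, .D 5], List.replicate 3 (.A 8), [.A 9, .A 9, .D 6],
    [.A 11, .D 7, .E6], [.A 12, .A 12], [.A 15, .D 9], [.A 17, .E7], [.A 24],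
    List.replicate 6 (.D 4), List.replicate 4 (.D 6), List.replicate 3 (.D 8),
    [.D 10, .E7, .E7], [.D 12, .D 12], [.D 16, .E8], [.D 24],
    List.replicate 4 .E6, List.replicate 3 .E8 ]

/-- The Coxeter number of a union of components (that of its first component). -/
def coxOf : List ADE → ℕ
  | [] => 0
  | C :: _ => C.cox

/-- The Coxeter Frame shape of a union of components. -/
def frameOf (X : List ADE) : List (ℕ × ℤ) := (X.map ADE.frame).flatten
/-- The Dedekind eta function `η(τ) = q^{1/24} ∏_{n ≥ 1} (1 - q^n)`. -/
def dedekindEta (τ : ℂ) : ℂ := e2 (τ / 24) * ∏' n : ℕ, (1 - e2 ((n + 1 : ℂ) * τ))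

/-- The Jacobi theta function
`θ₁(τ,z) = -i q^{1/8} y^{1/2} ∏_{n≥1} (1-q^n)(1-yq^n)(1-y⁻¹q^{n-1})`. -/
def jacobiTheta1 (τ z : ℂ) : ℂ :=
  -Complex.I * e2 (τ / 8) * e2 (z / 2) *
    ∏' n : ℕ, ((1 - e2 ((n + 1 : ℂ) * τ)) * (1 - e2 (z + (n + 1 : ℂ) * τ)) *
      (1 - e2 (-z + (n : ℂ) * τ)))

/-- The meromorphic Jacobi form `μ_{1,0}(τ,z) = -i θ₁(τ,2z) η(τ)³ / θ₁(τ,z)²` of weight 1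
and index 1. -/
def mu10 (τ z : ℂ) : ℂ :=
  -Complex.I * jacobiTheta1 τ (2 * z) * dedekindEta τ ^ 3 / jacobiTheta1 τ z ^ 2
/-- The weight 2 Eisenstein form
`λ_N(τ) = q∂_q log(η(Nτ)/η(τ)) = (N-1)/24 + Σ_{k>0} σ(k)(q^k - N q^{Nk})`. -/
def lambdaN (N : ℕ) (τ : ℂ) : ℂ :=
  ((N : ℂ) - 1) / 24 +
    ∑' k : ℕ, ((ArithmeticFunction.sigma 1) (k + 1) : ℂ) *
      (e2 ((k + 1 : ℂ) * τ) - (N : ℂ) * e2 ((N : ℂ) * (k + 1 : ℂ) * τ))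
/-- The eta product `η_π(τ) = ∏ η(n_i τ)^{k_i}` of a frame shape `π = ∏ n_i^{k_i}`. -/
def etaFrame (P : List (ℕ × ℤ)) (τ : ℂ) : ℂ :=
  (P.map fun p => dedekindEta ((p.1 : ℂ) * τ) ^ p.2).prod

/-- The lambda sum `λ_π = Σ_i k_i λ_{n_i}` of a frame shape `π = ∏ n_i^{k_i}`. -/
def lambdaFrame (P : List (ℕ × ℤ)) (τ : ℂ) : ℂ :=
  (P.map fun p => (p.2 : ℂ) * lambdaN p.1 τ).sum
/-- The subset `Γ0(N)+S = ∪_{e ∈ S} W_N(e)` of `SL₂(ℝ)`, where `W_N(e)` consists of the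
matrices `(1/√e)[[ae, b],[cN, de]]` with `a,b,c,d ∈ ℤ` and `ade - bc(N/e) = 1`.
In particular `GammaPlus N {1} = Γ0(N)`. -/
def GammaPlus (N : ℕ) (S : Set ℕ) : Set (Matrix.SpecialLinearGroup (Fin 2) ℝ) :=
  { g | ∃ e ∈ S, ∃ a b c d : ℤ,
      a * d * (e : ℤ) - b * c * ((N / e : ℕ) : ℤ) = 1 ∧
      (g : Matrix (Fin 2) (Fin 2) ℝ) =
        (Real.sqrt (e : ℝ))⁻¹ •
          !![(a : ℝ) * (e : ℝ), (b : ℝ); (c : ℝ) * (N : ℝ), (d : ℝ) * (e : ℝ)] }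

/-- The genus zero group `Γ^X` attached to a Niemeier root system `X`:
`Γ0(m)` if `X` has an A-type component (`m` the Coxeter number), `Γ0(2n)+n` if `X` has a
D-type but no A-type component and Coxeter number `2n`, `Γ0(12)+4` for `X = E6⁴` and
`Γ0(30)+6,10,15` for `X = E8³`. -/
def GammaX (X : List ADE) : Set (Matrix.SpecialLinearGroup (Fin 2) ℝ) :=
  if X.any ADE.isA then GammaPlus (coxOf X) {1}
  else if X.any ADE.isD then GammaPlus (coxOf X) {1, coxOf X / 2}
  else if X.any ADE.isE6 then GammaPlus 12 {1, 4}
  else GammaPlus 30 {1, 6, 10, 15}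

open scoped Manifold in
/-- `f` is a principal modulus (Hauptmodul) for `Γ ⊆ SL₂(ℝ)`: it is a `Γ`-invariant
holomorphic function on the upper half-plane generating the field of `Γ`-invariant
functions, i.e. inducing an isomorphism from `Γ\ℍ` onto the complement of a finite set
of points of the Riemann sphere; equivalently, `f` is injective on `Γ`-orbits and its
range is cofinite in `ℂ`. -/
def IsPrincipalModulus (Γ : Set (Matrix.SpecialLinearGroup (Fin 2) ℝ))
    (f : UpperHalfPlane → ℂ) : Prop :=
  MDifferentiable 𝓘(ℂ) 𝓘(ℂ) f ∧
  (∀ γ ∈ Γ, ∀ τ : UpperHalfPlane, f (γ • τ) = f τ) ∧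
  (∀ τ₁ τ₂ : UpperHalfPlane, f τ₁ = f τ₂ → ∃ γ ∈ Γ, γ • τ₁ = τ₂) ∧
  (Set.range f)ᶜ.Finite
/-- The expansion condition `T(τ) = q⁻¹ - d + O(q)` as `τ → i∞`, where `q = e^{2πiτ}`. -/
def HasOqExpansion (d : ℕ) (T : UpperHalfPlane → ℂ) : Prop :=
  UpperHalfPlane.IsBoundedAtImInfty fun τ : UpperHalfPlane =>
    (T τ - e2 (-(τ : ℂ)) + (d : ℂ)) * e2 (-(τ : ℂ))

/-- `T^X = 1/η_{π^X}`, the reciprocal of the eta product of the Coxeter Frame shape. -/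
def TX (X : List ADE) : UpperHalfPlane → ℂ := fun τ => (etaFrame (frameOf X) (τ : ℂ))⁻¹

/-!
Let `T = 1/η_P`, where `P` is the Frame shape of a Niemeier root system, and let `Γ = Γ₀(N)+S` be
the attached group. The transformation law of `η` makes `T` invariant under `Γ₀(N)`. An Atkin-Lehner
involution permutes the factors `η(nτ)` of `η_P`, so it preserves `|T|` and multiplies `T` by a
constant; the constant is `1` because some element of the Atkin-Lehner coset fixes a point of `ℍ`,
or a cusp at which `T` has a finite nonzero limit.

At the cusps equivalent to `i∞` the function `T` has a simple pole, and at all the others a finite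
limit. So `Γ \ ℍ → ℂ` is proper away from finitely many values, and it is injective near its only
pole. Hence its degree is `1`.

Two principal moduli with the same expansion `q⁻¹ - d + O(q)` differ by a bounded holomorphic
`Γ`-invariant function which vanishes at `i∞`.
-/

namespace Niemeier

open UpperHalfPlane Filter Set
open scoped Manifold MatrixGroups

/-! ### Separation of equivalence classes by open maps -/

section Separation

variable {X Y : Type*} {r : Setoid X} {T : X → Y} {c : Y}

/-- The values that `T` takes at two inequivalent points; `T` separates the classes of `r` when
there are none. -/
def nonseparatedValues (r : Setoid X) (T : X → Y) : Set Y :=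
  {c | ∃ x y, T x = c ∧ T y = c ∧ ¬ r x y}

lemma rel_of_nonseparatedValues_eq_empty (h : nonseparatedValues r T = ∅) {x y : X}
    (hxy : T x = T y) : r x y := by
  by_contra hr
  exact eq_empty_iff_forall_notMem.mp h (T y) ⟨x, y, hxy, rfl, hr⟩

variable [TopologicalSpace X] [TopologicalSpace Y]

lemma isOpen_nonseparatedValues (hr : IsClosed {p : X × X | r p.1 p.2}) (hT : IsOpenMap T) :
    IsOpen (nonseparatedValues r T) := by
  rw [isOpen_iff_mem_nhds]
  rintro _ ⟨x, y, rfl, hxy, hrel⟩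
  obtain ⟨V, hV, W, hW, hVW⟩ := mem_nhds_prod_iff.mp
    (hr.isOpen_compl.mem_nhds (show (x, y) ∈ {p : X × X | r p.1 p.2}ᶜ from hrel))
  filter_upwards [hT.image_mem_nhds hV, hxy ▸ hT.image_mem_nhds hW]
  rintro _ ⟨x', hx', rfl⟩ ⟨y', hy', hxy'⟩
  exact ⟨x', y', rfl, hxy', hVW (mk_mem_prod hx' hy')⟩

/-- `T` is proper modulo `r` over a neighbourhood of `c`: up to equivalence, the fibres over the
points near `c` are contained in a common compact set. -/
def IsProperModAt (r : Setoid X) (T : X → Y) (c : Y) : Prop :=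
  ∃ K, IsCompact K ∧ ∀ᶠ c' in 𝓝 c, ∀ x, T x = c' → ∃ y ∈ K, r x y

variable [T2Space Y]

lemma IsProperModAt.compl_range_mem_nhds (h : IsProperModAt r T c) (hT : Continuous T)
    (hinv : ∀ x y, r x y → T x = T y) (hc : c ∉ range T) : (range T)ᶜ ∈ 𝓝 c := by
  obtain ⟨K, hK, hfib⟩ := h
  have himage : (T '' K)ᶜ ∈ 𝓝 c := (hK.image hT).isClosed.isOpen_compl.mem_nhds
    fun h => hc (image_subset_range _ _ h)
  filter_upwards [hfib, himage]
  rintro _ hfib hnot ⟨x, rfl⟩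
  obtain ⟨y, hy, hxy⟩ := hfib x rfl
  exact hnot ⟨y, hy, (hinv x y hxy).symm⟩

lemma IsProperModAt.compl_nonseparatedValues_mem_nhds (h : IsProperModAt r T c)
    (hT : Continuous T) (hinv : ∀ x y, r x y → T x = T y)
    (hloc : ∀ x y, T x = c → r x y → ∀ᶠ p in 𝓝 (x, y), T p.1 = T p.2 → r p.1 p.2)
    (hc : c ∉ nonseparatedValues r T) : (nonseparatedValues r T)ᶜ ∈ 𝓝 c := by
  obtain ⟨K, hK, hfib⟩ := h
  have hsep : ∀ᶠ c' in 𝓝 c, ∀ p ∈ K ×ˢ K, T p.1 = c' → T p.2 = c' → r p.1 p.2 := by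
    refine (hK.prod hK).eventually_forall_of_forall_eventually fun ⟨x, y⟩ _ => ?_
    have hne : ∀ f : X × X → X, Continuous f → T (f (x, y)) ≠ c →
        ∀ᶠ q : Y × X × X in 𝓝 (c, (x, y)), T (f q.2) ≠ q.1 := fun f hf hfc =>
      (isOpen_ne_fun (hT.comp (hf.comp continuous_snd)) continuous_fst).mem_nhds hfc
    by_cases hx : T x = c
    · by_cases hy : T y = c
      · have hxy : r x y := by
          by_contra hr
          exact hc ⟨x, y, hx, hy, hr⟩
        filter_upwards [continuous_snd.continuousAt.eventually (hloc x y hx hxy)]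
          with q hq hq₁ hq₂ using hq (hq₁.trans hq₂.symm)
      · filter_upwards [hne Prod.snd continuous_snd hy] with q hq _ hq' using absurd hq' hq
    · filter_upwards [hne Prod.fst continuous_fst hx] with q hq hq' using absurd hq' hq
  filter_upwards [hsep, hfib]
  rintro c' hsep hfib ⟨x, y, hx, hy, hxy⟩
  obtain ⟨x', hx', hxx'⟩ := hfib x hx
  obtain ⟨y', hy', hyy'⟩ := hfib y hy
  exact hxy (r.trans (r.trans hxx'
    (hsep (x', y') ⟨hx', hy'⟩ ((hinv _ _ hxx').symm.trans hx) ((hinv _ _ hyy').symm.trans hy)))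
    (r.symm hyy'))

end Separation

section Connectedness

variable {E : Type*} [AddCommGroup E] [Module ℝ E] [TopologicalSpace E] [ContinuousAdd E]
  [ContinuousSMul ℝ E] {S : Set E}

/-- The complement of a countable set is connected and dense. -/
lemma eq_empty_or_compl_subset_of_isOpen (hrank : 1 < Module.rank ℝ E) {U : Set E}
    (hU : IsOpen U) (hS : S.Countable) (h : ∀ c ∉ S, c ∉ U → Uᶜ ∈ 𝓝 c) :
    U = ∅ ∨ Sᶜ ⊆ U := by
  have : Nontrivial E := rank_pos_iff_nontrivial.mp (zero_lt_one.trans hrank)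
  refine or_iff_not_imp_left.mpr fun hne => ?_
  obtain ⟨c₀, hc₀U, hc₀S⟩ :=
    (hS.dense_compl ℝ).inter_open_nonempty U hU (nonempty_iff_ne_empty.mpr hne)
  have hcover : Sᶜ ⊆ U ∪ interior Uᶜ := fun c hc =>
    or_iff_not_imp_left.mpr fun hcU => mem_interior_iff_mem_nhds.mpr (h c hc hcU)
  exact (hS.isConnected_compl_of_one_lt_rank hrank).isPreconnected.subset_left_of_subset_union
    hU isOpen_interior (disjoint_compl_right.mono_right interior_subset) hcover ⟨c₀, hc₀S, hc₀U⟩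

variable {X : Type*} [TopologicalSpace X] [T2Space E] {r : Setoid X} {T : X → E}

lemma compl_subset_range_of_isProperModAt [Nonempty X] (hrank : 1 < Module.rank ℝ E)
    (hS : S.Countable) (hT : Continuous T) (hopen : IsOpenMap T)
    (hinv : ∀ x y, r x y → T x = T y) (hproper : ∀ c ∉ S, IsProperModAt r T c) :
    Sᶜ ⊆ range T :=
  (eq_empty_or_compl_subset_of_isOpen hrank hopen.isOpen_range hS fun c hcS hc =>
    (hproper c hcS).compl_range_mem_nhds hT hinv hc).resolve_left (range_nonempty T).ne_empty

lemma nonseparatedValues_eq_empty_of_isProperModAt (hrank : 1 < Module.rank ℝ E)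
    (hS : S.Countable) (hr : IsClosed {p : X × X | r p.1 p.2}) (hT : Continuous T)
    (hopen : IsOpenMap T) (hinv : ∀ x y, r x y → T x = T y)
    (hproper : ∀ c ∉ S, IsProperModAt r T c)
    (hloc : ∀ x y, T x ∉ S → r x y → ∀ᶠ p in 𝓝 (x, y), T p.1 = T p.2 → r p.1 p.2)
    {V : Set E} (hV : IsOpen V) (hVne : V.Nonempty) (hsep : V ⊆ (nonseparatedValues r T)ᶜ) :
    nonseparatedValues r T = ∅ := by
  have : Nontrivial E := rank_pos_iff_nontrivial.mp (zero_lt_one.trans hrank)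
  refine (eq_empty_or_compl_subset_of_isOpen hrank (isOpen_nonseparatedValues hr hopen) hS
    fun c hcS hc => (hproper c hcS).compl_nonseparatedValues_mem_nhds hT hinv
      (fun x y hx => hloc x y (hx ▸ hcS)) hc).resolve_right fun hsub => ?_
  obtain ⟨c, hcV, hcS⟩ := (hS.dense_compl ℝ).inter_open_nonempty V hV hVne
  exact hsep hcV (hsub hcS)

end Connectedness

/-! ### Holomorphic functions on the upper half-plane -/

section Holomorphic

variable {T : ℍ → ℂ}

lemma analyticOnNhd_comp_ofComplex (hT : MDifferentiable 𝓘(ℂ) 𝓘(ℂ) T) :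
    AnalyticOnNhd ℂ (T ∘ ofComplex) upperHalfPlaneSet :=
  (UpperHalfPlane.mdifferentiable_iff.mp hT).analyticOnNhd isOpen_upperHalfPlaneSet

lemma isPreconnected_upperHalfPlaneSet : IsPreconnected upperHalfPlaneSet :=
  (convex_halfSpace_im_gt 0).isPreconnected

lemma isOpenMap_of_mdifferentiable (hT : MDifferentiable 𝓘(ℂ) 𝓘(ℂ) T)
    (hne : ¬ ∃ c, ∀ τ, T τ = c) : IsOpenMap T := by
  intro s hs
  rcases (analyticOnNhd_comp_ofComplex hT).is_constant_or_isOpen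
    isPreconnected_upperHalfPlaneSet with ⟨c, hc⟩ | hopen
  · exact (hne ⟨c, fun τ => by simpa using hc τ τ.im_pos⟩).elim
  · have himage := hopen ((↑) '' s) (by rintro _ ⟨τ, -, rfl⟩; exact τ.im_pos)
      (isOpenEmbedding_coe.isOpenMap s hs)
    rw [image_image] at himage
    simpa using himage

lemma countable_setOf_deriv_eq_zero (hT : MDifferentiable 𝓘(ℂ) 𝓘(ℂ) T)
    (hne : ¬ ∃ c, ∀ τ, T τ = c) : {τ : ℍ | deriv (T ∘ ofComplex) τ = 0}.Countable := by
  have hF := analyticOnNhd_comp_ofComplex hT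
  refine IsLindelof.countable (HereditarilyLindelofSpace.isLindelof _) ?_
  rw [discreteTopology_subtype_iff]
  intro τ _
  rw [← disjoint_iff, disjoint_principal_right]
  rcases (hF τ τ.im_pos).deriv.eventually_eq_zero_or_eventually_ne_zero with h | h
  · have hzero : EqOn (deriv (T ∘ ofComplex)) 0 upperHalfPlaneSet :=
      hF.deriv.eqOn_zero_of_preconnected_of_eventuallyEq_zero
        isPreconnected_upperHalfPlaneSet τ.im_pos h
    obtain ⟨c, hc⟩ := isOpen_upperHalfPlaneSet.exists_is_const_of_deriv_eq_zero
      isPreconnected_upperHalfPlaneSet hF.differentiableOn hzero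
    exact (hne ⟨c, fun τ => by simpa using hc τ τ.im_pos⟩).elim
  · have hmaps : MapsTo ((↑) : ℍ → ℂ) {τ}ᶜ {(τ : ℂ)}ᶜ := fun z hz hzτ => hz (UpperHalfPlane.ext hzτ)
    exact (continuous_coe.continuousWithinAt.tendsto_nhdsWithin hmaps).eventually h

lemma exists_mem_nhds_injOn_of_deriv_ne_zero (hT : MDifferentiable 𝓘(ℂ) 𝓘(ℂ) T) {τ : ℍ}
    (h : deriv (T ∘ ofComplex) τ ≠ 0) : ∃ U ∈ 𝓝 τ, InjOn T U := by
  have hs : HasStrictDerivAt (T ∘ ofComplex) (deriv (T ∘ ofComplex) τ) τ :=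
    (analyticOnNhd_comp_ofComplex hT τ τ.im_pos).hasStrictDerivAt
  refine ⟨_, (continuous_coe.tendsto τ).eventually (hs.eventually_left_inverse h),
    fun x hx y hy hxy => ?_⟩
  simp only [Function.comp_apply, ofComplex_apply, mem_ofPred_eq] at hx hy
  rw [hxy, hy] at hx
  exact (UpperHalfPlane.ext hx).symm

end Holomorphic

section Orbits

variable {Γ : Subgroup SL(2, ℝ)} {T : ℍ → ℂ}

lemma orbitRel_iff {x y : ℍ} : MulAction.orbitRel Γ ℍ x y ↔ ∃ γ ∈ Γ, γ • x = y := by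
  rw [Setoid.comm', MulAction.orbitRel_apply]
  exact ⟨fun ⟨γ, h⟩ => ⟨γ, γ.2, h⟩, fun ⟨γ, hγ, h⟩ => ⟨⟨γ, hγ⟩, h⟩⟩

lemma isClosed_orbitRel (hΓ : IsClosed (Γ : Set SL(2, ℝ))) :
    IsClosed {p : ℍ × ℍ | MulAction.orbitRel Γ ℍ p.1 p.2} := by
  convert (ProperSMul.isProperMap_smul_pair (G := SL(2, ℝ)) (X := ℍ)).isClosedMap
    ((Γ : Set SL(2, ℝ)) ×ˢ univ) (hΓ.prod isClosed_univ) using 1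
  ext ⟨x, y⟩
  simp only [mem_ofPred_eq, MulAction.orbitRel_apply, mem_image, mem_prod, mem_univ, and_true,
    Prod.mk.injEq, Prod.exists]
  constructor
  · rintro ⟨γ, h⟩
    exact ⟨γ, y, γ.2, h, rfl⟩
  · rintro ⟨γ, _, hγ, h, rfl⟩
    exact ⟨⟨γ, hγ⟩, h⟩

lemma eventually_orbitRel_of_deriv_ne_zero (hT : MDifferentiable 𝓘(ℂ) 𝓘(ℂ) T)
    (hinv : ∀ γ ∈ Γ, ∀ τ, T (γ • τ) = T τ) {x y : ℍ} (hx : deriv (T ∘ ofComplex) x ≠ 0)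
    (hxy : MulAction.orbitRel Γ ℍ x y) :
    ∀ᶠ p in 𝓝 (x, y), T p.1 = T p.2 → MulAction.orbitRel Γ ℍ p.1 p.2 := by
  obtain ⟨γ, hγ, rfl⟩ := orbitRel_iff.mp hxy
  obtain ⟨U, hU, hinj⟩ := exists_mem_nhds_injOn_of_deriv_ne_zero hT hx
  have hsnd : Continuous fun p : ℍ × ℍ => γ⁻¹ • p.2 := by fun_prop
  filter_upwards [continuous_fst.continuousAt.eventually_mem hU,
    hsnd.continuousAt.eventually_mem (by simpa using hU)] with p hp₁ hp₂ hp
  refine orbitRel_iff.mpr ⟨γ, hγ, ?_⟩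
  rw [hinj hp₁ hp₂ (by rw [hinv _ (Γ.inv_mem hγ), hp]), smul_inv_smul]

end Orbits

/-! ### A criterion for principal moduli -/

/-- The vertical strip of the upper half-plane above height `1/2`, which contains a fundamental
domain for the modular group. -/
def strip : Set ℍ := {z | |z.re| ≤ 1 / 2 ∧ 1 / 2 ≤ z.im}

lemma isCompact_strip_inter_im_le (Y : ℝ) : IsCompact (strip ∩ {z : ℍ | z.im ≤ Y}) := by
  rw [isEmbedding_coe.isCompact_iff]
  convert (isCompact_Icc (a := -(1 / 2 : ℝ)) (b := 1 / 2)).reProdIm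
    (isCompact_Icc (a := (1 / 2 : ℝ)) (b := Y)) using 1
  ext z
  simp only [strip, mem_image, mem_inter_iff, mem_ofPred_eq, Complex.mem_reProdIm, mem_Icc, abs_le]
  constructor
  · rintro ⟨w, ⟨⟨hre, him⟩, hY⟩, rfl⟩
    exact ⟨hre, him, hY⟩
  · rintro ⟨hre, him, hY⟩
    exact ⟨⟨z, by linarith⟩, ⟨⟨hre, him⟩, hY⟩, rfl⟩

lemma exists_forall_mem_strip_of_eventually {f : ℍ → ℂ} (hf : Continuous f) {p : ℍ → Prop}
    (h : ∃ C, ∀ᶠ z in atImInfty, C < ‖f z‖ → p z) :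
    ∃ R, ∀ z ∈ strip, R < ‖f z‖ → p z := by
  obtain ⟨C, hC⟩ := h
  obtain ⟨Y, hY⟩ := (atImInfty_mem _).mp hC
  obtain ⟨M, hM⟩ := ((isCompact_strip_inter_im_le Y).image hf).isBounded.exists_norm_le
  refine ⟨max M C, fun z hz hlt => ?_⟩
  obtain ⟨hMz, hCz⟩ := max_lt_iff.mp hlt
  rcases le_total z.im Y with hzY | hzY
  · exact absurd (hM _ ⟨z, ⟨hz, hzY⟩, rfl⟩) (not_le.mpr hMz)
  · exact hY z hzY hCz

/-- The maps `g i` parametrise neighbourhoods of the cusps of the quotient of the upper half-plane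
by `r`: together, the images of the strip under them meet every equivalence class. -/
structure IsCuspCover {ι : Type*} (r : Setoid ℍ) (g : ι → ℍ → ℍ) : Prop where
  continuous (i : ι) : Continuous (g i)
  exists_rel (τ : ℍ) : ∃ i, ∃ z ∈ strip, r τ (g i z)

section CuspCover

variable {ι : Type*} [Finite ι] {r : Setoid ℍ} {g : ι → ℍ → ℍ} {T : ℍ → ℂ}

lemma IsCuspCover.isProperModAt (hg : IsCuspCover r g) (hinv : ∀ x y, r x y → T x = T y) {c : ℂ}
    (hcusp : ∀ i, ∃ V ∈ 𝓝 c, ∀ᶠ z in atImInfty, T (g i z) ∉ V) : IsProperModAt r T c := by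
  choose V hV hVT using hcusp
  choose Y hY using fun i => (atImInfty_mem _).mp (hVT i)
  refine ⟨⋃ i, g i '' (strip ∩ {z | z.im ≤ Y i}),
    isCompact_iUnion fun i => (isCompact_strip_inter_im_le _).image (hg.continuous i), ?_⟩
  filter_upwards [iInter_mem.mpr hV]
  rintro _ hc τ rfl
  obtain ⟨i, z, hz, hτ⟩ := hg.exists_rel τ
  refine ⟨g i z, mem_iUnion.mpr ⟨i, z, ⟨hz, ?_⟩, rfl⟩, hτ⟩
  by_contra hlt
  exact hY i z (not_le.mp hlt).le (hinv _ _ hτ ▸ mem_iInter.mp hc i)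

lemma IsCuspCover.exists_rel_lt_im (hg : IsCuspCover r g) (hinv : ∀ x y, r x y → T x = T y)
    (hT : Continuous T)
    (hcusp : ∀ i, (∃ t, Tendsto (T ∘ g i) atImInfty (𝓝 t)) ∨
      ∃ u : ℍ → ℍ, Tendsto u atImInfty atImInfty ∧ ∀ z, r (u z) (g i z)) (Y : ℝ) :
    ∃ R, ∀ τ, R < ‖T τ‖ → ∃ τ', Y < τ'.im ∧ r τ τ' := by
  have hstrip : ∀ i, ∃ R, ∀ z ∈ strip, R < ‖(T ∘ g i) z‖ → ∃ τ', Y < τ'.im ∧ r (g i z) τ' := by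
    refine fun i => exists_forall_mem_strip_of_eventually (hT.comp (hg.continuous i)) ?_
    rcases hcusp i with ⟨t, ht⟩ | ⟨u, hu, hug⟩
    · refine ⟨‖t‖ + 1, ?_⟩
      filter_upwards [ht.norm.eventually_le_const (lt_add_one ‖t‖)] with z hz hlt
        using absurd hz (not_le.mpr hlt)
    · refine ⟨0, ?_⟩
      filter_upwards [(tendsto_comap_iff.mp hu).eventually_gt_atTop Y] with z hz _
        using ⟨u z, hz, r.symm (hug z)⟩
  choose R hR using hstrip
  obtain ⟨M, hM⟩ := (finite_range R).bddAbove
  refine ⟨M, fun τ hτ => ?_⟩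
  obtain ⟨i, z, hz, hτz⟩ := hg.exists_rel τ
  rw [hinv _ _ hτz] at hτ
  obtain ⟨τ', hY, hrel⟩ := hR i z hz ((hM ⟨i, rfl⟩).trans_lt hτ)
  exact ⟨τ', hY, r.trans hτz hrel⟩

end CuspCover

section Criterion

variable {Γ : Subgroup SL(2, ℝ)} {T : ℍ → ℂ} {ι : Type*} [Finite ι] {g : ι → ℍ → ℍ}

lemma exists_finite_forall_isProperModAt (hg : IsCuspCover (MulAction.orbitRel Γ ℍ) g)
    (hinv : ∀ x y, MulAction.orbitRel Γ ℍ x y → T x = T y)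
    (hcusp : ∀ i, (∃ t, Tendsto (T ∘ g i) atImInfty (𝓝 t)) ∨
      Tendsto (T ∘ g i) atImInfty (cocompact ℂ)) :
    ∃ B : Set ℂ, B.Finite ∧ ∀ c ∉ B, IsProperModAt (MulAction.orbitRel Γ ℍ) T c := by
  refine ⟨⋃ i, {t | Tendsto (T ∘ g i) atImInfty (𝓝 t)}, finite_iUnion fun i =>
    Subsingleton.finite fun s hs t ht => tendsto_nhds_unique hs ht, fun c hc => ?_⟩
  refine hg.isProperModAt hinv fun i => ?_
  rcases hcusp i with ⟨t, ht⟩ | h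
  · have hne : t ≠ c := by
      rintro rfl
      exact hc (mem_iUnion.mpr ⟨i, ht⟩)
    obtain ⟨U, V, hU, hV, hUV⟩ := t2_separation_nhds hne
    exact ⟨V, hV, (ht.eventually hU).mono fun z hz hz' => disjoint_left.mp hUV hz hz'⟩
  · exact ⟨Metric.closedBall c 1, Metric.closedBall_mem_nhds c one_pos,
      h.eventually (isCompact_closedBall c 1).compl_mem_cocompact⟩

/-- The induced map `Γ \ ℍ → ℂ` is proper away from finitely many cusp values and injective near
its only pole, at `i∞`. The number of its preimages is locally constant on the connected complement
of the countably many cusp values and critical values, so it is injective; and its open range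
contains every value which is not a cusp value. -/
theorem isPrincipalModulus_of_injective_at_infty (hΓ : IsClosed (Γ : Set SL(2, ℝ)))
    (hT : MDifferentiable 𝓘(ℂ) 𝓘(ℂ) T)
    (hinv : ∀ γ ∈ Γ, ∀ τ, T (γ • τ) = T τ)
    (hg : IsCuspCover (MulAction.orbitRel Γ ℍ) g)
    (hcusp : ∀ i, (∃ t, Tendsto (T ∘ g i) atImInfty (𝓝 t)) ∨
      ∃ u, Tendsto u atImInfty atImInfty ∧ ∀ z, MulAction.orbitRel Γ ℍ (u z) (g i z))
    (hinfty : Tendsto T atImInfty (cocompact ℂ))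
    (hinj : ∃ Y : ℝ, ∀ x y : ℍ, Y < x.im → Y < y.im → T x = T y → MulAction.orbitRel Γ ℍ x y) :
    IsPrincipalModulus (Γ : Set SL(2, ℝ)) T := by
  have hinv' : ∀ x y, MulAction.orbitRel Γ ℍ x y → T x = T y := fun x y hxy => by
    obtain ⟨γ, hγ, rfl⟩ := orbitRel_iff.mp hxy
    rw [hinv γ hγ]
  have hne : ¬ ∃ c, ∀ τ, T τ = c := by
    rintro ⟨c, hc⟩
    obtain ⟨τ, hτ⟩ := (hinfty.eventually (isCompact_singleton (x := c)).compl_mem_cocompact).exists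
    exact hτ (hc τ)
  have hopen := isOpenMap_of_mdifferentiable hT hne
  obtain ⟨B, hB, hproper⟩ := exists_finite_forall_isProperModAt hg hinv' fun i =>
    (hcusp i).imp_right fun ⟨u, hu, hug⟩ =>
      (hinfty.comp hu).congr fun z => hinv' _ _ (hug z)
  have hrank : 1 < Module.rank ℝ ℂ := by simp
  refine ⟨hT, hinv, fun x y hxy => orbitRel_iff.mp (rel_of_nonseparatedValues_eq_empty ?_ hxy),
    hB.subset (compl_subset_comm.mp
      (compl_subset_range_of_isProperModAt hrank hB.countable hT.continuous hopen hinv' hproper))⟩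
  obtain ⟨Y, hY⟩ := hinj
  obtain ⟨R, hR⟩ := hg.exists_rel_lt_im hinv' hT.continuous hcusp Y
  refine nonseparatedValues_eq_empty_of_isProperModAt hrank
    (hB.countable.union ((countable_setOf_deriv_eq_zero hT hne).image T)) (isClosed_orbitRel hΓ)
    hT.continuous hopen hinv' (fun c hc => hproper c fun h => hc (.inl h))
    (fun x y hx => eventually_orbitRel_of_deriv_ne_zero hT hinv fun h => hx (.inr ⟨x, h, rfl⟩))
    (isOpen_lt continuous_const continuous_norm) (NormedSpace.exists_lt_norm ℝ ℂ R) ?_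
  rintro _ hlt ⟨x, y, rfl, hxy, hnot⟩
  obtain ⟨x', hx', hxx'⟩ := hR x hlt
  obtain ⟨y', hy', hyy'⟩ := hR y (hxy ▸ hlt)
  have hxy' : T x' = T y' := by rw [← hinv' _ _ hxx', ← hinv' _ _ hyy', hxy]
  exact hnot (Setoid.trans' _ (Setoid.trans' _ hxx' (hY x' y' hx' hy' hxy')) (Setoid.symm' _ hyy'))

end Criterion

/-! ### The exponential `e2` -/

lemma e2_eq_qParam (z : ℂ) : e2 z = Function.Periodic.qParam 1 z := by
  simp [e2, Function.Periodic.qParam]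

lemma e2_ne_zero (z : ℂ) : e2 z ≠ 0 := Complex.exp_ne_zero _

lemma e2_add (z w : ℂ) : e2 (z + w) = e2 z * e2 w := by
  simp [e2, mul_add, Complex.exp_add]

@[simp] lemma e2_zero : e2 0 = 1 := by simp [e2]

lemma e2_neg (z : ℂ) : e2 (-z) = (e2 z)⁻¹ := by simp [e2, Complex.exp_neg]

lemma e2_natCast_mul (n : ℕ) (z : ℂ) : e2 (n * z) = e2 z ^ n := by
  rw [e2, e2, ← Complex.exp_nat_mul, mul_left_comm]

lemma e2_intCast_mul (n : ℤ) (z : ℂ) : e2 (n * z) = e2 z ^ n := by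
  rw [e2, e2, ← Complex.exp_int_mul, mul_left_comm]

lemma e2_intCast (n : ℤ) : e2 n = 1 := by
  rw [e2, mul_comm]
  exact Complex.exp_int_mul_two_pi_mul_I n

lemma e2_add_intCast (z : ℂ) (n : ℤ) : e2 (z + n) = e2 z := by
  rw [e2_add, e2_intCast, mul_one]

lemma e2_eq_e2_iff {z w : ℂ} : e2 z = e2 w ↔ ∃ n : ℤ, z = w + n := by
  rw [e2, e2, Complex.exp_eq_exp_iff_exists_int]
  refine exists_congr fun n => ?_
  rw [mul_comm (n : ℂ), ← mul_add]
  exact mul_right_inj' Complex.two_pi_I_ne_zero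

lemma norm_e2 (z : ℂ) : ‖e2 z‖ = Real.exp (-2 * Real.pi * z.im) := by
  simpa [e2_eq_qParam] using Function.Periodic.norm_qParam 1 z

lemma differentiable_e2 : Differentiable ℂ e2 := by
  unfold e2
  fun_prop

lemma tendsto_e2_atImInfty : Tendsto (fun τ : ℍ => e2 τ) atImInfty (𝓝 0) := by
  simpa only [e2_eq_qParam] using qParam_tendsto_atImInfty one_pos

lemma tendsto_e2_atImInfty_nhdsNE : Tendsto (fun τ : ℍ => e2 τ) atImInfty (𝓝[≠] 0) :=
  tendsto_nhdsWithin_iff.mpr ⟨tendsto_e2_atImInfty, .of_forall fun _ => e2_ne_zero _⟩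

lemma eventually_exists_lt_im_e2_eq (Y : ℝ) :
    ∀ᶠ q in 𝓝[≠] (0 : ℂ), ∃ τ : ℍ, Y < τ.im ∧ e2 τ = q := by
  filter_upwards [self_mem_nhdsWithin, (Function.Periodic.invQParam_tendsto (h := 1)
    one_pos).eventually (tendsto_comap.eventually (eventually_gt_atTop (max Y 0)))] with q hq0 hq
  refine ⟨⟨_, (le_max_right _ _).trans_lt hq⟩, (le_max_left _ _).trans_lt hq, ?_⟩
  rw [e2_eq_qParam]
  exact Function.Periodic.qParam_right_inv one_ne_zero hq0

/-! ### Functions with a simple pole at infinity -/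

/-- The function `T` of `q = e2 τ` is `q⁻¹ Φ(q)`, with `Φ` analytic at `0` and `Φ(0) = 1`; that is,
it has a simple pole with residue `1` at the cusp `i∞`. -/
structure HasPoleSeries (T : ℍ → ℂ) (Φ : ℂ → ℂ) : Prop where
  analyticAt : AnalyticAt ℂ Φ 0
  map_zero : Φ 0 = 1
  apply_eq (τ : ℍ) : T τ = (e2 τ)⁻¹ * Φ (e2 τ)

namespace HasPoleSeries

variable {T : ℍ → ℂ} {Φ : ℂ → ℂ}

lemma inv_apply_eq (h : HasPoleSeries T Φ) (τ : ℍ) : (T τ)⁻¹ = e2 τ / Φ (e2 τ) := by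
  rw [h.apply_eq, mul_inv, inv_inv, div_eq_mul_inv]

lemma hasStrictDerivAt_id_div (h : HasPoleSeries T Φ) :
    HasStrictDerivAt (fun q => q / Φ q) 1 0 := by
  simpa [h.map_zero] using!
    (hasStrictDerivAt_id (0 : ℂ)).div h.analyticAt.hasStrictDerivAt (by simp [h.map_zero])

lemma tendsto_cocompact (h : HasPoleSeries T Φ) : Tendsto T atImInfty (cocompact ℂ) := by
  have hΦ : Tendsto (fun τ : ℍ => ‖Φ (e2 τ)‖) atImInfty (𝓝 1) := by
    simpa [h.map_zero] using (h.analyticAt.continuousAt.tendsto.comp tendsto_e2_atImInfty).norm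
  have hq : Tendsto (fun τ : ℍ => ‖(e2 τ)⁻¹‖) atImInfty atTop :=
    tendsto_norm_atTop_iff_cobounded.mpr
      (tendsto_inv₀_nhdsNE_zero.comp tendsto_e2_atImInfty_nhdsNE)
  rw [← Metric.cobounded_eq_cocompact, ← tendsto_norm_atTop_iff_cobounded]
  exact (hq.atTop_mul_pos one_pos hΦ).congr fun τ => by rw [h.apply_eq, norm_mul]

lemma exists_forall_lt_im_eq_add_intCast (h : HasPoleSeries T Φ) :
    ∃ Y : ℝ, ∀ x y : ℍ, Y < x.im → Y < y.im → T x = T y → ∃ n : ℤ, (x : ℂ) = y + n := by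
  obtain ⟨Y, hY⟩ := (atImInfty_mem _).mp (tendsto_e2_atImInfty.eventually
    (h.hasStrictDerivAt_id_div.eventually_left_inverse one_ne_zero))
  refine ⟨Y, fun x y hx hy heq => e2_eq_e2_iff.mp ?_⟩
  rw [← show _ = e2 x from hY x hx.le, ← show _ = e2 y from hY y hy.le, ← h.inv_apply_eq,
    ← h.inv_apply_eq, heq]

lemma eventually_exists_lt_im_eq (h : HasPoleSeries T Φ) (Y : ℝ) :
    ∀ᶠ w in cocompact ℂ, ∃ τ : ℍ, Y < τ.im ∧ T τ = w := by
  have hmap : map (fun q => q / Φ q) (𝓝 0) = 𝓝 0 := by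
    simpa using h.hasStrictDerivAt_id_div.map_nhds_eq one_ne_zero
  have hnear : ∀ᶠ w in 𝓝 (0 : ℂ), ∃ q, (q ≠ 0 → ∃ τ : ℍ, Y < τ.im ∧ e2 τ = q) ∧ q / Φ q = w := by
    rw [← hmap, eventually_map]
    filter_upwards [eventually_nhdsWithin_iff.mp (eventually_exists_lt_im_e2_eq Y)] with q hq
      using ⟨q, hq, rfl⟩
  rw [← Metric.cobounded_eq_cocompact]
  filter_upwards [(tendsto_inv₀_cobounded (α := ℂ)).eventually hnear,
    Bornology.eventually_ne_cobounded 0] with w hw hw0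
  obtain ⟨q, hq, hqw⟩ := hw
  have hq0 : q ≠ 0 := by
    rintro rfl
    exact inv_ne_zero hw0 (by simpa using hqw.symm)
  obtain ⟨τ, hτ, rfl⟩ := hq hq0
  exact ⟨τ, hτ, inv_injective (by rw [h.inv_apply_eq, hqw])⟩

lemma hasOqExpansion (h : HasPoleSeries T Φ) {d : ℕ} (hd : deriv Φ 0 = -d) :
    HasOqExpansion d T := by
  obtain ⟨p, hp⟩ := h.analyticAt
  have hsum : ∀ y, p.partialSum 2 y = 1 - d * y := by
    intro y
    have hcoeff₀ : p.coeff 0 = 1 := by rw [← h.map_zero, ← hp.coeff_zero 1]; rfl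
    have hcoeff₁ : p.coeff 1 = -d := by rw [← hd, hp.deriv]; rfl
    simp only [FormalMultilinearSeries.partialSum, Finset.sum_range_succ, Finset.range_zero,
      Finset.sum_empty, FormalMultilinearSeries.apply_eq_pow_smul_coeff, hcoeff₀, hcoeff₁,
      smul_eq_mul]
    ring
  have hO := (hp.isBigO_sub_partialSum_pow 2).comp_tendsto tendsto_e2_atImInfty
  refine ((hO.mul (Asymptotics.isBigO_refl (fun τ : ℍ => (e2 τ)⁻¹ ^ 2)
    atImInfty).norm_right).congr_left fun τ => ?_).trans
      (Asymptotics.IsBigO.of_bound 1 (.of_forall fun τ => ?_))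
  · have := e2_ne_zero τ
    simp only [Function.comp_apply, zero_add, hsum, h.apply_eq, e2_neg]
    field_simp
    ring
  · simp [e2_ne_zero τ]

end HasPoleSeries

/-! ### Sums and products over a frame shape -/

section Frame

variable {P : List (ℕ × ℤ)}

/-- The product `∏ f(n_i) ^ k_i` over a frame shape `∏ n_i ^ k_i`. -/
def frameProd {M : Type*} [CommGroupWithZero M] (P : List (ℕ × ℤ)) (f : ℕ → M) : M :=
  (P.map fun p => f p.1 ^ p.2).prod

/-- The sum `∑ k_i f(n_i)` over a frame shape `∏ n_i ^ k_i`. -/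
def frameSum {R : Type*} [CommRing R] (P : List (ℕ × ℤ)) (f : ℕ → R) : R :=
  (P.map fun p => p.2 * f p.1).sum

section Algebra

variable {M : Type*} [CommGroupWithZero M] {R : Type*} [CommRing R]

@[simp] lemma frameProd_nil (f : ℕ → M) : frameProd [] f = 1 := rfl

@[simp] lemma frameProd_cons (p : ℕ × ℤ) (P : List (ℕ × ℤ)) (f : ℕ → M) :
    frameProd (p :: P) f = f p.1 ^ p.2 * frameProd P f := rfl

@[simp] lemma frameSum_nil (f : ℕ → R) : frameSum [] f = 0 := rfl

@[simp] lemma frameSum_cons (p : ℕ × ℤ) (P : List (ℕ × ℤ)) (f : ℕ → R) :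
    frameSum (p :: P) f = p.2 * f p.1 + frameSum P f := rfl

lemma frameProd_congr {f g : ℕ → M} (h : ∀ p ∈ P, f p.1 = g p.1) :
    frameProd P f = frameProd P g :=
  congr_arg List.prod (List.map_congr_left fun p hp => by rw [h p hp])

lemma frameSum_congr {f g : ℕ → R} (h : ∀ p ∈ P, f p.1 = g p.1) :
    frameSum P f = frameSum P g :=
  congr_arg List.sum (List.map_congr_left fun p hp => by rw [h p hp])

lemma frameProd_mul (f g : ℕ → M) :
    frameProd P (fun n => f n * g n) = frameProd P f * frameProd P g := by
  simp only [frameProd, mul_zpow, List.prod_map_mul]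

lemma frameProd_pow (f : ℕ → M) (k : ℕ) : frameProd P (fun n => f n ^ k) = frameProd P f ^ k := by
  induction P with
  | nil => simp
  | cons p P ih =>
    rw [frameProd_cons, frameProd_cons, ih, mul_pow, ← zpow_natCast (f p.1),
      ← zpow_natCast (f p.1 ^ p.2), zpow_comm]

lemma frameSum_mul_left (a : R) (f : ℕ → R) :
    frameSum P (fun n => a * f n) = a * frameSum P f := by
  simp only [frameSum, mul_left_comm _ a, List.sum_map_mul_left]

lemma intCast_frameSum (f : ℕ → ℤ) : ((frameSum P f : ℤ) : R) = frameSum P fun n => (f n : R) := by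
  simp only [frameSum, Int.cast_list_sum, List.map_map, Function.comp_def, Int.cast_mul,
    Int.cast_id]

lemma frameProd_ne_zero {f : ℕ → M} (h : ∀ p ∈ P, f p.1 ≠ 0) : frameProd P f ≠ 0 := by
  refine List.prod_ne_zero fun hzero => ?_
  obtain ⟨p, hp, hp0⟩ := List.mem_map.mp hzero
  exact zpow_ne_zero _ (h p hp) hp0

lemma frameProd_zpow {x : M} (hx : x ≠ 0) (f : ℕ → ℤ) :
    frameProd P (fun n => x ^ f n) = x ^ frameSum P f := by
  induction P with
  | nil => simp
  | cons p P ih =>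
    rw [frameProd_cons, frameSum_cons, ih, ← zpow_mul, zpow_add₀ hx, mul_comm (f _), Int.cast_id]

lemma frameProd_const {x : M} (hx : x ≠ 0) (P : List (ℕ × ℤ)) :
    frameProd P (fun _ => x) = x ^ frameSum P (1 : ℕ → ℤ) := by
  simpa using frameProd_zpow hx (P := P) 1

lemma map_frameProd {N F : Type*} [CommGroupWithZero N] [FunLike F M N]
    [MonoidWithZeroHomClass F M N] (φ : F) (f : ℕ → M) :
    φ (frameProd P f) = frameProd P fun n => φ (f n) := by
  simp only [frameProd, map_list_prod, List.map_map, Function.comp_def, map_zpow₀]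

lemma norm_frameProd {f : ℕ → ℂ} : ‖frameProd P f‖ = frameProd P fun n => ‖f n‖ :=
  map_frameProd (normHom (α := ℂ)) f

end Algebra

lemma exp_frameSum (f : ℕ → ℝ) :
    Real.exp (frameSum P f) = frameProd P fun n => Real.exp (f n) := by
  induction P with
  | nil => simp
  | cons p P ih =>
    rw [frameProd_cons, frameSum_cons, Real.exp_add, ih, ← Real.rpow_intCast, ← Real.exp_mul,
      mul_comm (f _)]

lemma tendsto_frameProd {X : Type*} {l : Filter X} {f : X → ℕ → ℝ} {g : ℕ → ℝ}
    (hf : ∀ p ∈ P, Tendsto (f · p.1) l (𝓝 (g p.1))) (hg : ∀ p ∈ P, g p.1 ≠ 0) :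
    Tendsto (fun x => frameProd P (f x)) l (𝓝 (frameProd P g)) :=
  tendsto_list_prod P fun p hp => (hf p hp).zpow₀ p.2 (.inl (hg p hp))

section Analytic

variable {f : ℕ → ℂ → ℂ} {z : ℂ}

lemma analyticAt_frameProd (hf : ∀ p ∈ P, AnalyticAt ℂ (f p.1) z)
    (hne : ∀ p ∈ P, f p.1 z ≠ 0) : AnalyticAt ℂ (fun w => frameProd P (f · w)) z := by
  induction P with
  | nil => exact analyticAt_const
  | cons p P ih =>
    rw [List.forall_mem_cons] at hf hne
    exact (hf.1.zpow hne.1).mul (ih hf.2 hne.2)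

lemma logDeriv_frameProd (hf : ∀ p ∈ P, AnalyticAt ℂ (f p.1) z)
    (hne : ∀ p ∈ P, f p.1 z ≠ 0) :
    logDeriv (fun w => frameProd P (f · w)) z = frameSum P fun n => logDeriv (f n) z := by
  induction P with
  | nil => simp [logDeriv_const]
  | cons p P ih =>
    rw [List.forall_mem_cons] at hf hne
    rw [frameSum_cons, ← ih hf.2 hne.2, ← logDeriv_fun_zpow hf.1.differentiableAt]
    exact logDeriv_mul z (zpow_ne_zero _ hne.1) (frameProd_ne_zero (f := (f · z)) hne.2)
      (hf.1.zpow hne.1).differentiableAt (analyticAt_frameProd hf.2 hne.2).differentiableAt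

end Analytic

end Frame

/-! ### Eta products -/

/-- The Euler product `∏ (1 - q ^ n)`. -/
def eulerProduct (q : ℂ) : ℂ := ∏' n : ℕ, (1 - q ^ (n + 1))

lemma dedekindEta_eq_e2_mul_eulerProduct (τ : ℂ) :
    dedekindEta τ = e2 (τ / 24) * eulerProduct (e2 τ) := by
  simp only [dedekindEta, eulerProduct, ← e2_natCast_mul, Nat.cast_succ]

lemma dedekindEta_eq_eta (τ : ℂ) : dedekindEta τ = ModularForm.eta τ := by
  rw [dedekindEta_eq_e2_mul_eulerProduct, ModularForm.eta, eulerProduct, e2,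
    Function.Periodic.qParam]
  congr 2
  · push_cast
    ring
  · simp only [ModularForm.eta_q, e2_eq_qParam]

lemma dedekindEta_ne_zero {τ : ℂ} (hτ : 0 < τ.im) : dedekindEta τ ≠ 0 := by
  rw [dedekindEta_eq_eta]
  exact ModularForm.eta_ne_zero hτ

lemma analyticAt_dedekindEta {τ : ℂ} (hτ : 0 < τ.im) : AnalyticAt ℂ dedekindEta τ := by
  rw [show dedekindEta = ModularForm.eta from funext dedekindEta_eq_eta]
  exact DifferentiableOn.analyticAt
    (fun z hz => DifferentiableAt.differentiableWithinAt
      (ModularForm.differentiableAt_eta_of_mem_upperHalfPlaneSet hz))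
    (isOpen_upperHalfPlaneSet.mem_nhds hτ)

@[simp] lemma eulerProduct_zero : eulerProduct 0 = 1 := by simp [eulerProduct]

lemma analyticAt_eulerProduct : AnalyticAt ℂ eulerProduct 0 :=
  ModularForm.differentiableOn_tprod_one_sub_pow.analyticAt
    (Metric.isOpen_ball.mem_nhds (by simp))

lemma logDeriv_eulerProduct : logDeriv eulerProduct 0 = -1 := by
  have hterm (n : ℕ) : logDeriv (fun q : ℂ => 1 - q ^ (n + 1)) 0 = if n = 0 then -1 else 0 := by
    rcases n with _ | n <;> simp [logDeriv_apply]
  have htsum := logDeriv_tprod_eq_tsum (x := 0) Metric.isOpen_ball (by simp)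
    (f := fun (n : ℕ) (q : ℂ) => 1 - q ^ (n + 1)) (by simp) (by fun_prop)
    (by simp only [hterm]; exact (hasSum_ite_eq 0 (-1 : ℂ)).summable)
    ModularForm.multipliableLocallyUniformlyOn_one_sub_pow (by simp)
  simp only [hterm, tsum_ite_eq] at htsum
  exact htsum

lemma analyticAt_eulerProduct_pow {n : ℕ} (hn : 0 < n) :
    AnalyticAt ℂ (fun q => eulerProduct (q ^ n)) 0 :=
  AnalyticAt.fun_comp (by simpa [hn.ne'] using analyticAt_eulerProduct) (by fun_prop)

lemma logDeriv_eulerProduct_pow {n : ℕ} (hn : 0 < n) :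
    logDeriv (fun q => eulerProduct (q ^ n)) 0 = -if n = 1 then 1 else 0 := by
  have hzero : (0 : ℂ) ^ n = 0 := zero_pow hn.ne'
  have hcomp := logDeriv_comp (f := eulerProduct) (g := fun q : ℂ => q ^ n) (x := 0)
    (by simpa only [hzero] using analyticAt_eulerProduct.differentiableAt) (by fun_prop)
  rw [Function.comp_def] at hcomp
  rw [hcomp, hzero, logDeriv_eulerProduct, deriv_pow_field]
  split_ifs with h
  · simp [h]
  · simp [show n - 1 ≠ 0 by lia]

section EtaFrame

variable {P : List (ℕ × ℤ)}

/-- The power series `∏ φ(q ^ n_i) ^ (-k_i)` of the reciprocal of an eta product, without its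
leading power of `q`; here `φ` is the Euler product. -/
def frameSeries (P : List (ℕ × ℤ)) (q : ℂ) : ℂ := (frameProd P fun n => eulerProduct (q ^ n))⁻¹

lemma etaFrame_eq_frameProd (P : List (ℕ × ℤ)) (τ : ℂ) :
    etaFrame P τ = frameProd P fun n => dedekindEta (n * τ) := rfl

lemma etaFrame_eq_e2_mul_frameSeries (τ : ℂ) :
    etaFrame P τ = e2 (τ / 24) ^ frameSum P ((↑) : ℕ → ℤ) * (frameSeries P (e2 τ))⁻¹ := by
  rw [etaFrame_eq_frameProd, frameSeries, inv_inv, ← frameProd_zpow (e2_ne_zero _),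
    ← frameProd_mul]
  simp only [dedekindEta_eq_e2_mul_eulerProduct, mul_div_assoc, e2_natCast_mul, zpow_natCast]

lemma eulerProduct_pow_zero_ne_zero (hP : ∀ p ∈ P, 0 < p.1) :
    ∀ p ∈ P, eulerProduct (0 ^ p.1) ≠ 0 := fun p hp => by
  simp [zero_pow (hP p hp).ne']

lemma frameSeries_zero (hP : ∀ p ∈ P, 0 < p.1) : frameSeries P 0 = 1 := by
  rw [frameSeries, frameProd_congr (g := 1) fun p hp => by simp [zero_pow (hP p hp).ne'],
    show (1 : ℕ → ℂ) = fun _ => 1 from rfl, frameProd_const one_ne_zero, one_zpow, inv_one]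

lemma analyticAt_frameSeries (hP : ∀ p ∈ P, 0 < p.1) : AnalyticAt ℂ (frameSeries P) 0 :=
  (analyticAt_frameProd (fun p hp => analyticAt_eulerProduct_pow (hP p hp))
    (eulerProduct_pow_zero_ne_zero hP)).inv (frameProd_ne_zero (eulerProduct_pow_zero_ne_zero hP))

lemma deriv_frameSeries (hP : ∀ p ∈ P, 0 < p.1) :
    deriv (frameSeries P) 0 = (frameSum P fun n => if n = 1 then 1 else 0 : ℤ) := by
  let φ : ℕ → ℂ → ℂ := fun n q => eulerProduct (q ^ n)
  have hana : ∀ p ∈ P, AnalyticAt ℂ (φ p.1) 0 := fun p hp => analyticAt_eulerProduct_pow (hP p hp)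
  have hne : ∀ p ∈ P, φ p.1 0 ≠ 0 := eulerProduct_pow_zero_ne_zero hP
  have hterm : ∀ p ∈ P, logDeriv (φ p.1) 0 = -1 * if p.1 = 1 then 1 else 0 := fun p hp => by
    rw [logDeriv_eulerProduct_pow (hP p hp), neg_one_mul]
  calc
    deriv (frameSeries P) 0 = logDeriv (frameSeries P) 0 := by
      rw [logDeriv_apply, frameSeries_zero hP, div_one]
    _ = -logDeriv (fun q => frameProd P (φ · q)) 0 := by
      change logDeriv (fun q => (frameProd P (φ · q))⁻¹) 0 = _
      simpa using logDeriv_fun_zpow (analyticAt_frameProd hana hne).differentiableAt (-1)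
    _ = frameSum P fun n => if n = 1 then 1 else 0 := by
      rw [logDeriv_frameProd hana hne, frameSum_congr (f := fun n => logDeriv (φ n) 0)
        (g := fun n => -1 * if n = 1 then 1 else 0) hterm,
        frameSum_mul_left, neg_one_mul, neg_neg]
    _ = (frameSum P fun n => if n = 1 then 1 else 0 : ℤ) := by
      rw [intCast_frameSum]
      simp only [Int.cast_ite, Int.cast_one, Int.cast_zero]

lemma hasPoleSeries_etaFrame_inv (hP : ∀ p ∈ P, 0 < p.1)
    (hsum : frameSum P ((↑) : ℕ → ℤ) = 24) :
    HasPoleSeries (fun τ => (etaFrame P τ)⁻¹) (frameSeries P) where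
  analyticAt := analyticAt_frameSeries hP
  map_zero := frameSeries_zero hP
  apply_eq τ := by
    rw [etaFrame_eq_e2_mul_frameSeries, hsum, ← e2_intCast_mul, mul_inv, inv_inv,
      Int.cast_ofNat, mul_div_cancel₀ _ (by norm_num)]

lemma im_natCast_mul_pos {n : ℕ} (hn : 0 < n) {τ : ℂ} (hτ : 0 < τ.im) : 0 < ((n : ℂ) * τ).im := by
  simpa using mul_pos (Nat.cast_pos.mpr hn) hτ

lemma etaFrame_ne_zero (hP : ∀ p ∈ P, 0 < p.1) {τ : ℂ} (hτ : 0 < τ.im) : etaFrame P τ ≠ 0 :=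
  frameProd_ne_zero (f := fun n => dedekindEta (n * τ)) fun p hp =>
    dedekindEta_ne_zero (im_natCast_mul_pos (hP p hp) hτ)

lemma analyticAt_etaFrame (hP : ∀ p ∈ P, 0 < p.1) {τ : ℂ} (hτ : 0 < τ.im) :
    AnalyticAt ℂ (etaFrame P) τ :=
  analyticAt_frameProd (f := fun n z => dedekindEta (n * z))
    (fun p hp => (analyticAt_dedekindEta (im_natCast_mul_pos (hP p hp) hτ)).fun_comp (by fun_prop))
    fun p hp => dedekindEta_ne_zero (im_natCast_mul_pos (hP p hp) hτ)

lemma mdifferentiable_etaFrame_inv (hP : ∀ p ∈ P, 0 < p.1) :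
    MDifferentiable 𝓘(ℂ) 𝓘(ℂ) fun τ : ℍ => (etaFrame P τ)⁻¹ := by
  refine UpperHalfPlane.mdifferentiable_iff.mpr fun τ hτ => ?_
  have hana := (analyticAt_etaFrame hP hτ).inv (etaFrame_ne_zero hP hτ)
  refine (hana.differentiableAt.congr_of_eventuallyEq ?_).differentiableWithinAt
  filter_upwards [isOpen_upperHalfPlaneSet.mem_nhds hτ] with z hz
  simp [ofComplex_apply_of_im_pos hz]

end EtaFrame

/-! ### Shifting the lower argument of a Jacobi symbol -/

section Jacobi

open scoped NumberTheorySymbols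

private lemma odd_add_two_mul {n : ℕ} (hn : Odd n) (k : ℕ) : Odd (n + 2 * k) :=
  hn.add_even (even_two_mul k)

lemma jacobiSym_add_four_mul (m : ℤ) {n : ℕ} (hn : Odd n) :
    J(m | n + 4 * m.natAbs) = J(m | n) := by
  have hodd : Odd (n + 4 * m.natAbs) := hn.add_even (by simp [parity_simps])
  rw [jacobiSym.mod_right m hodd, jacobiSym.mod_right m hn, Nat.add_mod_right]

lemma jacobiSym_natCast_add_two_mul {m n : ℕ} (hm : Odd m) (hn : Odd n) :
    J(m | n + 2 * m) = (if m % 4 < 2 then 1 else -1) * J(m | n) := by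
  have hodd := odd_add_two_mul hn m
  have hmod : J(((n + 2 * m : ℕ) : ℤ) | m) = J((n : ℤ) | m) :=
    jacobiSym.mod_left' (by push_cast; simp)
  rw [Nat.odd_iff] at hm hn hodd
  have hswap : (n + 2 * m) % 4 = 3 ↔ ¬n % 4 = 3 := by lia
  rw [← jacobiSym.quadratic_reciprocity_if hm hodd, ← jacobiSym.quadratic_reciprocity_if hm hn,
    hmod]
  simp only [hswap]
  split_ifs <;> lia

lemma jacobiSym_two_mul_add_two_mul (m : ℤ) {n : ℕ} (hn : Odd n) :
    J(2 * m | n + 2 * (2 * m).natAbs) =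
      (if (2 * m) % 4 < 2 then 1 else -1) * J(2 * m | n) := by
  have hχ₈ : ∀ x : ZMod 8, ZMod.χ₈ (x + 4) = -ZMod.χ₈ x := by decide
  have hshift : ((n + 2 * (2 * m).natAbs : ℕ) : ZMod 8) =
      if (2 * m) % 4 < 2 then (n : ZMod 8) else n + 4 := by
    split_ifs with h
    · obtain ⟨k, hk⟩ : ∃ k, (2 * m).natAbs = 4 * k := ⟨(2 * m).natAbs / 4, by lia⟩
      exact (ZMod.natCast_eq_natCast_iff' _ _ _).mpr (by lia)
    · exact_mod_cast (ZMod.natCast_eq_natCast_iff' _ (n + 4) 8).mpr (by lia)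
  rw [jacobiSym.mul_left, jacobiSym.mul_left, jacobiSym.at_two (odd_add_two_mul hn _),
    jacobiSym.at_two hn, hshift,
    show n + 2 * (2 * m).natAbs = n + 4 * m.natAbs by lia, jacobiSym_add_four_mul m hn]
  split_ifs
  · rw [one_mul]
  · rw [hχ₈, neg_mul, neg_one_mul]

lemma jacobiSym_neg_natCast_add_two_mul {m n : ℕ} (hm : Odd m) (hn : Odd n) :
    J(-(m : ℤ) | n + 2 * m) = (if -(m : ℤ) % 4 < 2 then 1 else -1) * J(-(m : ℤ) | n) := by
  have hχ₄ : ∀ x : ZMod 4, ZMod.χ₄ (x + 2) = -ZMod.χ₄ x := by decide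
  rw [Nat.odd_iff] at hm
  have hshift : ((n + 2 * m : ℕ) : ZMod 4) = n + 2 := by
    exact_mod_cast (ZMod.natCast_eq_natCast_iff' _ (n + 2) 4).mpr (by lia)
  rw [jacobiSym.neg _ (odd_add_two_mul hn m), jacobiSym.neg _ hn, hshift, hχ₄,
    jacobiSym_natCast_add_two_mul (Nat.odd_iff.mpr hm) hn]
  split_ifs <;> first | lia | ring1

lemma jacobiSym_add_two_mul_natAbs (c : ℤ) {n : ℕ} (hn : Odd n) :
    J(c | n + 2 * c.natAbs) = (if c % 4 < 2 then 1 else -1) * J(c | n) := by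
  rcases Int.even_or_odd' c with ⟨m, rfl | hc⟩
  · exact jacobiSym_two_mul_add_two_mul m hn
  · obtain ⟨k, rfl | rfl⟩ := Int.eq_nat_or_neg c
    · rw [Int.natAbs_natCast, jacobiSym_natCast_add_two_mul (Nat.odd_iff.mpr (by lia)) hn]
      exact congr_arg (· * _) (if_congr (by lia) rfl rfl)
    · rw [Int.natAbs_neg, Int.natAbs_natCast]
      exact jacobiSym_neg_natCast_add_two_mul (Nat.odd_iff.mpr (by lia)) hn

end Jacobi

/-! ### Multiplicativity of the principal square root -/

section SquareRoot

open Complex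

variable {z w : ℂ}

lemma sqrt_mul_self (z : ℂ) : sqrt z * sqrt z = z := by
  rw [← sq, Complex.sqrt, cpow_ofNat_inv_pow]

lemma sqrt_eq_of_sq_eq (h : w ^ 2 = z) (hw : 0 < w.re) : sqrt z = w := by
  rw [Complex.sqrt, ← h, sq_cpow_two_inv hw]

lemma sqrt_ne_zero (hz : z ≠ 0) : sqrt z ≠ 0 := fun h => hz <| by
  rw [← sqrt_mul_self z, h, zero_mul]

lemma re_sqrt_pos (hz : z ∈ slitPlane) : 0 < (sqrt z).re := by
  rw [Complex.sqrt, cpow_inv_two_re]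
  have hre : 0 < ‖z‖ + z.re := by
    rcases hz with h | h
    · positivity
    · linarith [neg_abs_le z.re, abs_re_lt_norm.mpr h]
  positivity

lemma im_eq_two_mul_re_mul_im_sqrt (z : ℂ) : z.im = 2 * (sqrt z).re * (sqrt z).im := by
  conv_lhs => rw [← sqrt_mul_self z, mul_im]
  ring

lemma sqrt_mul_of_im (hz : z ∈ slitPlane) (hw : w ∈ slitPlane)
    (him : 0 < z.im * w.im → 0 < z.im * (z * w).im) : sqrt (z * w) = sqrt z * sqrt w := by
  have hsq : (sqrt z * sqrt w) ^ 2 = z * w := by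
    rw [sq, mul_mul_mul_comm, sqrt_mul_self, sqrt_mul_self]
  refine sqrt_eq_of_sq_eq hsq ?_
  have hz_im := im_eq_two_mul_re_mul_im_sqrt z
  have hw_im := im_eq_two_mul_re_mul_im_sqrt w
  have hzw_im : (z * w).im = 2 * (sqrt z * sqrt w).re * (sqrt z * sqrt w).im := by
    rw [← hsq, sq, mul_im]
    ring
  have hz_re := re_sqrt_pos hz
  have hw_re := re_sqrt_pos hw
  simp only [mul_re (sqrt z), mul_im (sqrt z)] at hzw_im ⊢
  rw [hzw_im, hz_im, hw_im] at him
  set a := (sqrt z).re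
  set b := (sqrt z).im
  set c := (sqrt w).re
  set d := (sqrt w).im
  by_contra! hle
  have hbd : 0 < b * d := (mul_pos hz_re hw_re).trans_le (sub_nonpos.mp hle)
  have hpos := him (by
    rw [show 2 * a * b * (2 * c * d) = 4 * (a * c) * (b * d) by ring]
    positivity)
  rw [show 2 * a * b * (2 * (a * c - b * d) * (a * d + b * c)) =
    4 * a * (a * (b * d) + b ^ 2 * c) * (a * c - b * d) by ring] at hpos
  exact hpos.not_ge (mul_nonpos_of_nonneg_of_nonpos (by positivity) hle)

lemma sqrt_mul_of_re (hz : 0 < z.re) (hw : 0 < w.re) : sqrt (z * w) = sqrt z * sqrt w := by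
  refine sqrt_mul_of_im (.inl hz) (.inl hw) fun h => ?_
  rw [mul_im, show z.im * (z.re * w.im + z.im * w.re) =
    z.re * (z.im * w.im) + z.im ^ 2 * w.re by ring]
  positivity

lemma sqrt_eq_sqrt_I_mul {τ : ℂ} (hτ : 0 < τ.im) :
    sqrt τ = sqrt Complex.I * sqrt (τ / Complex.I) := by
  have hre : 0 < (τ / Complex.I).re := by simpa using hτ
  have hI : Complex.I ∈ slitPlane := by simp [mem_slitPlane_iff]
  rw [← sqrt_mul_of_im hI (.inl hre) fun _ => ?_, mul_div_cancel₀ _ Complex.I_ne_zero]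
  rwa [mul_div_cancel₀ _ Complex.I_ne_zero, Complex.I_im, one_mul]

end SquareRoot

/-! ### The transformation law of the eta function -/

section Eta

lemma dedekindEta_add_intCast (τ : ℂ) (m : ℤ) :
    dedekindEta (τ + m) = e2 (m / 24) * dedekindEta τ := by
  rw [dedekindEta_eq_e2_mul_eulerProduct, dedekindEta_eq_e2_mul_eulerProduct, add_div, e2_add,
    e2_add_intCast]
  ring

lemma dedekindEta_neg_inv {τ : ℂ} (hτ : 0 < τ.im) :
    dedekindEta (-1 / τ) = Complex.sqrt (τ / Complex.I) * dedekindEta τ := by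
  have h := ModularForm.eta_comp_eq_csqrt_I_inv (x := τ) hτ
  have hI := sqrt_ne_zero Complex.I_ne_zero
  simp only [Function.comp_apply, Pi.smul_apply, Pi.mul_apply, smul_eq_mul,
    sqrt_eq_sqrt_I_mul hτ] at h
  rw [dedekindEta_eq_eta, dedekindEta_eq_eta, h]
  field_simp

lemma im_neg_one_div_pos {τ : ℂ} (hτ : 0 < τ.im) : 0 < (-1 / τ).im := by
  simpa [neg_div, inv_neg] using im_inv_neg_coe_pos ⟨τ, hτ⟩

lemma ne_zero_of_im_pos {τ : ℂ} (hτ : 0 < τ.im) : τ ≠ 0 := UpperHalfPlane.ne_zero ⟨τ, hτ⟩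

lemma dedekindEta_div_mul_add_one {τ : ℂ} (hτ : 0 < τ.im) (m : ℤ) :
    dedekindEta (τ / (m * τ + 1)) = e2 (-m / 24) * Complex.sqrt (m * τ + 1) * dedekindEta τ := by
  have hτ0 : τ ≠ 0 := ne_zero_of_im_pos hτ
  have him : 0 < (-1 / τ + (-m : ℤ)).im := by simpa using im_neg_one_div_pos hτ
  have hfactor : (m : ℂ) * τ + 1 = ((-1 / τ + (-m : ℤ)) / Complex.I) * (τ / Complex.I) := by
    rw [div_mul_div_comm, Complex.I_mul_I, add_mul, div_mul_cancel₀ _ hτ0]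
    push_cast
    ring
  have hmobius : τ / (m * τ + 1) = -1 / (-1 / τ + (-m : ℤ)) := by
    rw [hfactor, div_mul_div_comm, Complex.I_mul_I]
    field_simp
  rw [hmobius, dedekindEta_neg_inv him, dedekindEta_add_intCast, dedekindEta_neg_inv hτ, hfactor,
    sqrt_mul_of_re (by simpa using him) (by simpa using hτ)]
  rw [Int.cast_neg]
  ring

end Eta

section EtaMultiplier

open scoped NumberTheorySymbols

/-- The exponent, as a multiple of `1 / 24`, in Petersson's formula for the eta multiplier. -/
def etaExponent (a b c d : ℤ) : ℤ :=
  (a + d) * c - b * d * (c ^ 2 - 1) + 3 * d - 3 - 3 * c * d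

/-- The eta multiplier of `(a b; c d)`, given by Petersson's formula; it is meaningful for `d` odd
and positive. -/
def etaMultiplier (a b c d : ℤ) : ℂ :=
  (J(c | d.toNat) : ℤ) * e2 ((etaExponent a b c d : ℤ) / 24)

/-- The transformation law of the eta function under `(a b; c d)`. -/
def EtaLaw (a b c d : ℤ) : Prop :=
  ∀ τ : ℂ, 0 < τ.im → dedekindEta ((a * τ + b) / (c * τ + d)) =
    etaMultiplier a b c d * Complex.sqrt (c * τ + d) * dedekindEta τ

variable {a b c d s : ℤ}

lemma e2_div_congr {m n : ℤ} (h : 24 ∣ m - n) : e2 (m / 24) = e2 (n / 24) := by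
  obtain ⟨k, hk⟩ := h
  refine e2_eq_e2_iff.mpr ⟨k, ?_⟩
  have hk' : (m : ℂ) - n = 24 * k := by exact_mod_cast hk
  linear_combination hk' / 24

lemma e2_one_half : e2 (12 / 24) = -1 := by
  rw [e2, ← Complex.exp_pi_mul_I]
  ring_nf

lemma six_dvd_cube_sub (c : ℤ) : 6 ∣ c ^ 3 - c := by
  have h2 : 2 ∣ c ^ 3 - c := even_iff_two_dvd.mp (by simp [parity_simps])
  have h3 : 3 ∣ c ^ 3 - c := by
    refine (ZMod.intCast_zmod_eq_zero_iff_dvd _ 3).mp ?_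
    push_cast
    generalize (c : ZMod 3) = x
    decide +revert
  exact IsCoprime.mul_dvd (by norm_num) h2 h3

lemma twentyFour_dvd_cube_sub (hd : Odd d) : 24 ∣ d ^ 3 - d := by
  have h3 : 3 ∣ d ^ 3 - d := Dvd.dvd.trans (by norm_num) (six_dvd_cube_sub d)
  have h8 : 8 ∣ d ^ 3 - d := by
    rw [show d ^ 3 - d = d * (d ^ 2 - 1) by ring]
    exact (Int.eight_dvd_sq_sub_one_of_odd hd).mul_left d
  exact IsCoprime.mul_dvd (x := 8) (y := 3) (by norm_num) h8 h3

lemma dvd_etaExponent_sub_mul (hdet : a * d - b * c = 1) (hs : s = 1 ∨ s = -1) :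
    24 ∣ etaExponent a b c d -
      (etaExponent a (b - 2 * s * a) c (d - 2 * s * c) + 2 * s + 6 * s * c * (1 - c)) := by
  obtain ⟨k, hk⟩ := six_dvd_cube_sub c
  have hs2 : s ^ 2 = 1 := sq_eq_one_iff.mpr hs
  refine ⟨-(s * b - a) * k, ?_⟩
  simp only [etaExponent]
  linear_combination (-4 * (s * b - a)) * hk - 2 * s * (c ^ 2 - 1) * hdet
    + 4 * a * c * (c ^ 2 - 1) * hs2

lemma dvd_etaExponent_sub_mul_left (hdet : a * d - b * c = 1) (hs : s = 1 ∨ s = -1)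
    (hd : Odd d) : 24 ∣ etaExponent a b c d - (etaExponent (a - s * b) b (c - s * d) d - s) := by
  have hs2 : s ^ 2 = 1 := sq_eq_one_iff.mpr hs
  have hdiff : etaExponent a b c d - (etaExponent (a - s * b) b (c - s * d) d - s) =
      -(2 * s * (a - s * b) + b) * (d ^ 3 - d) := by
    simp only [etaExponent]
    linear_combination (s - 2 * s * (1 - d ^ 2)) * hdet + (b * d - b * d ^ 3) * hs2
  exact hdiff ▸ (twentyFour_dvd_cube_sub hd).mul_left _

lemma e2_six_mul (hs : s = 1 ∨ s = -1) (c : ℤ) :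
    e2 ((6 * s * c * (1 - c) : ℤ) / 24) = (if c % 4 < 2 then 1 else -1 : ℤ) := by
  split_ifs with hc
  · rw [e2_div_congr (n := 0)]
    · simp
    · obtain ⟨k, rfl | rfl⟩ : ∃ k, c = 4 * k ∨ c = 4 * k + 1 := ⟨c / 4, by lia⟩
      · exact ⟨s * k * (1 - 4 * k), by ring⟩
      · exact ⟨-s * k * (4 * k + 1), by ring⟩
  · rw [e2_div_congr (n := 12)]
    · simp [e2_one_half]
    · obtain ⟨k, rfl | rfl⟩ : ∃ k, c = 4 * k + 2 ∨ c = 4 * k + 3 := ⟨c / 4, by lia⟩ <;>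
        rcases hs with rfl | rfl
      · exact ⟨-4 * k ^ 2 - 3 * k - 1, by ring⟩
      · exact ⟨4 * k ^ 2 + 3 * k, by ring⟩
      · exact ⟨-4 * k ^ 2 - 5 * k - 2, by ring⟩
      · exact ⟨4 * k ^ 2 + 5 * k + 1, by ring⟩

lemma etaMultiplier_sub_mul (hs : s = 1 ∨ s = -1) (hsc : s * c = |c|)
    (hdet : a * d - b * c = 1) (hd : Odd d) (hlt : 2 * |c| < d) :
    etaMultiplier a b c d =
      etaMultiplier a (b - 2 * s * a) c (d - 2 * s * c) * e2 ((2 * s : ℤ) / 24) := by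
  obtain ⟨n, hn⟩ : ∃ n : ℕ, d - 2 * s * c = n :=
    Int.eq_ofNat_of_zero_le (by rw [mul_assoc, hsc]; linarith)
  have hd_eq : d.toNat = n + 2 * c.natAbs := by
    rw [mul_assoc, hsc, Int.abs_eq_natAbs] at hn
    lia
  have hn_odd : Odd n := by exact_mod_cast hn ▸ hd.sub_even ⟨s * c, by ring⟩
  have hexp := e2_div_congr (dvd_etaExponent_sub_mul hdet hs)
  rw [Int.cast_add, add_div, e2_add, e2_six_mul hs, Int.cast_add, add_div, e2_add] at hexp
  rw [etaMultiplier, etaMultiplier, hexp, hd_eq, hn, Int.toNat_natCast,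
    jacobiSym_add_two_mul_natAbs c hn_odd]
  split_ifs <;> push_cast <;> ring

lemma EtaLaw.of_sub_mul (hs : s = 1 ∨ s = -1) (hsc : s * c = |c|) (hdet : a * d - b * c = 1)
    (hd : Odd d) (hlt : 2 * |c| < d) (h : EtaLaw a (b - 2 * s * a) c (d - 2 * s * c)) :
    EtaLaw a b c d := by
  intro τ hτ
  have hshift := h (τ + (2 * s : ℤ)) (by simpa using hτ)
  have hnum : (a : ℂ) * (τ + (2 * s : ℤ)) + (b - 2 * s * a : ℤ) = a * τ + b := by
    push_cast
    ring
  have hden : (c : ℂ) * (τ + (2 * s : ℤ)) + (d - 2 * s * c : ℤ) = c * τ + d := by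
    push_cast
    ring
  rw [dedekindEta_add_intCast, hnum, hden] at hshift
  rw [hshift, etaMultiplier_sub_mul hs hsc hdet hd hlt]
  ring

lemma etaMultiplier_sub_mul_left (hs : s = 1 ∨ s = -1) (hdet : a * d - b * c = 1) (hd : Odd d)
    (hpos : 0 < d) :
    etaMultiplier a b c d = etaMultiplier (a - s * b) b (c - s * d) d * e2 (-s / 24) := by
  have hJ : J(c - s * d | d.toNat) = J(c | d.toNat) :=
    jacobiSym.mod_left' (by rw [Int.toNat_of_nonneg hpos.le]; simp)
  rw [etaMultiplier, etaMultiplier, hJ, mul_assoc, ← e2_add, ← add_div,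
    e2_div_congr (dvd_etaExponent_sub_mul_left hdet hs hd), Int.cast_sub, sub_eq_add_neg]

lemma mul_add_mem_slitPlane (c : ℤ) (hd : 0 < d) {τ : ℂ} (hτ : 0 < τ.im) :
    (c * τ + d : ℂ) ∈ Complex.slitPlane := by
  rw [Complex.mem_slitPlane_iff]
  by_cases hc : c = 0
  · left; simpa [hc] using hd
  · right; simp [hc, hτ.ne']

lemma im_div_mul_add_one_pos (s : ℤ) {τ : ℂ} (hτ : 0 < τ.im) : 0 < (τ / (s * τ + 1)).im := by
  have hne : (s * τ + 1 : ℂ) ≠ 0 := by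
    simpa using Complex.slitPlane_ne_zero (mul_add_mem_slitPlane s one_pos hτ)
  have him : (τ / (s * τ + 1)).im = τ.im / Complex.normSq (s * τ + 1) := by
    simp only [Complex.div_im, Complex.add_re, Complex.add_im, Complex.mul_re, Complex.mul_im,
      Complex.intCast_re, Complex.intCast_im, Complex.one_re, Complex.one_im]
    ring
  exact him ▸ div_pos hτ (Complex.normSq_pos.mpr hne)

/-- Both factors on the left of the cocycle relation lie in the half-plane of `c * τ + d` unless
they lie in opposite ones, so the principal square root is multiplicative on them. -/
lemma sqrt_cocycle (c s : ℤ) (hd : 0 < d) {τ : ℂ} (hτ : 0 < τ.im) :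
    Complex.sqrt (c * τ + d) =
      Complex.sqrt ((c - s * d : ℤ) * (τ / (s * τ + 1)) + d) * Complex.sqrt (s * τ + 1) := by
  have hw : (s * τ + 1 : ℂ) ∈ Complex.slitPlane := by
    simpa using mul_add_mem_slitPlane s one_pos hτ
  have hτ' := im_div_mul_add_one_pos s hτ
  have hmul : ((c - s * d : ℤ) * (τ / (s * τ + 1)) + d) * (s * τ + 1) = c * τ + d := by
    have := Complex.slitPlane_ne_zero hw
    push_cast
    field_simp
    ring
  rw [← hmul]
  refine sqrt_mul_of_im (mul_add_mem_slitPlane _ hd hτ') hw fun him => ?_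
  rw [hmul]
  generalize τ / (s * τ + 1) = σ at *
  simp only [Complex.add_im, Complex.mul_im, Complex.intCast_re, Complex.intCast_im, Complex.one_im,
    zero_mul, add_zero] at him ⊢
  have hprod : (0 : ℝ) < ((c - s * d : ℤ) : ℝ) * s := by
    rw [mul_mul_mul_comm] at him
    exact pos_of_mul_pos_left him (mul_pos hτ' hτ).le
  have hcoeff : (0 : ℝ) < ((c - s * d : ℤ) : ℝ) * c := by
    have hsum : ((c - s * d : ℤ) : ℝ) * c =
        ((c - s * d : ℤ) : ℝ) ^ 2 + ((c - s * d : ℤ) : ℝ) * s * d := by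
      push_cast
      ring
    exact hsum ▸ add_pos_of_nonneg_of_pos (sq_nonneg _) (mul_pos hprod (Int.cast_pos.mpr hd))
  rw [mul_mul_mul_comm]
  exact mul_pos hcoeff (mul_pos hτ' hτ)

lemma EtaLaw.of_sub_mul_left (hs : s = 1 ∨ s = -1) (hdet : a * d - b * c = 1) (hd : Odd d)
    (hpos : 0 < d) (h : EtaLaw (a - s * b) b (c - s * d) d) : EtaLaw a b c d := by
  intro τ hτ
  have hne : (s * τ + 1 : ℂ) ≠ 0 := by
    simpa using Complex.slitPlane_ne_zero (mul_add_mem_slitPlane s one_pos hτ)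
  have hlaw := h _ (im_div_mul_add_one_pos s hτ)
  have hnum : ((a - s * b : ℤ) * (τ / (s * τ + 1)) + b) * (s * τ + 1) = a * τ + b := by
    push_cast
    field_simp
    ring
  have hden : ((c - s * d : ℤ) * (τ / (s * τ + 1)) + d) * (s * τ + 1) = c * τ + d := by
    push_cast
    field_simp
    ring
  rw [← mul_div_mul_right _ _ hne, hnum, hden, dedekindEta_div_mul_add_one hτ] at hlaw
  rw [hlaw, sqrt_cocycle c s hpos hτ, etaMultiplier_sub_mul_left hs hdet hd hpos]
  ring

/-- Euclid's algorithm on the bottom row `(c, d)`, keeping `d` odd and positive. -/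
theorem etaLaw (hdet : a * d - b * c = 1) (hd : Odd d) (hpos : 0 < d) : EtaLaw a b c d := by
  induction hn : c.natAbs + d.toNat using Nat.strong_induction_on generalizing a b c d with
  | _ n ih =>
  by_cases hc : c = 0
  · subst hc
    obtain rfl : d = 1 := by
      rcases Int.eq_one_or_neg_one_of_mul_eq_one' (show a * d = 1 by linarith) with h | h <;> lia
    obtain rfl : a = 1 := by linarith
    intro τ _
    simp [etaMultiplier, etaExponent, dedekindEta_add_intCast]
  obtain ⟨s, hs, hsc⟩ : ∃ s : ℤ, (s = 1 ∨ s = -1) ∧ s * c = |c| := by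
    rcases abs_choice c with h | h
    · exact ⟨1, .inl rfl, by rw [h, one_mul]⟩
    · exact ⟨-1, .inr rfl, by rw [h, neg_one_mul]⟩
  have habs : 0 < |c| := abs_pos.mpr hc
  have hd2 : d % 2 = 1 := Int.odd_iff.mp hd
  rcases lt_or_ge (2 * |c|) d with hlt | hge
  · refine .of_sub_mul hs hsc hdet hd hlt (ih _ ?_ ?_ ?_ ?_ rfl)
    · rw [← hn, mul_assoc, hsc]
      lia
    · linear_combination hdet
    · exact hd.sub_even ⟨s * c, by ring⟩
    · rw [mul_assoc, hsc]
      linarith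
  · refine .of_sub_mul_left hs hdet hd hpos (ih _ ?_ ?_ hd hpos rfl)
    · rw [← hn]
      rcases hs with rfl | rfl <;> lia
    · linear_combination hdet

end EtaMultiplier

/-! ### Invariance of eta products under `Γ₀(N)` -/

/-- Conditions on a frame shape ensuring that its eta product is invariant under `Γ₀(N)`. -/
structure IsLevel (N : ℕ) (P : List (ℕ × ℤ)) : Prop where
  pos : ∀ p ∈ P, 0 < p.1
  dvd : ∀ p ∈ P, p.1 ∣ N
  weight : frameSum P (1 : ℕ → ℤ) = 0
  order_infty : 24 ∣ frameSum P ((↑) : ℕ → ℤ)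
  order_zero : 24 ∣ frameSum P fun n => ((N / n : ℕ) : ℤ)
  square : IsSquare (P.map fun p => p.1 ^ p.2.natAbs).prod

section Level

open scoped NumberTheorySymbols

variable {N : ℕ} {a b c d : ℤ} {τ : ℂ}

lemma e2_div_zpow (m : ℤ) {k : ℤ} (h : 24 ∣ k) : e2 (m / 24) ^ k = 1 := by
  obtain ⟨l, rfl⟩ := h
  rw [zpow_mul, ← e2_intCast_mul, Int.cast_ofNat, mul_div_cancel₀ _ (by norm_num), e2_intCast,
    one_zpow]

lemma dedekindEta_natCast_mul_add_intCast (n : ℕ) (τ : ℂ) (m : ℤ) :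
    dedekindEta (n * (τ + m)) = e2 (m / 24) ^ (n : ℤ) * dedekindEta (n * τ) := by
  have h := dedekindEta_add_intCast (n * τ) (n * m)
  rw [Int.cast_mul, Int.cast_natCast, mul_div_assoc, e2_natCast_mul] at h
  rw [mul_add, h, zpow_natCast]

lemma etaFrame_add_intCast (h : 24 ∣ frameSum P ((↑) : ℕ → ℤ)) (τ : ℂ) (m : ℤ) :
    etaFrame P (τ + m) = etaFrame P τ := by
  simp only [etaFrame_eq_frameProd, dedekindEta_natCast_mul_add_intCast, frameProd_mul,
    frameProd_zpow (e2_ne_zero _), e2_div_zpow m h, one_mul]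

lemma jacobiSym_zpow_eq {a : ℤ} {b : ℕ} (h : a.gcd b = 1) (k : ℤ) :
    (J(a | b) : ℂ) ^ k = (J(a ^ k.natAbs | b) : ℤ) := by
  have hsq : (J(a | b) : ℂ)⁻¹ = J(a | b) := by
    rcases jacobiSym.eq_one_or_neg_one h with h | h <;> rw [h] <;> norm_num
  rw [jacobiSym.pow_left, Int.cast_pow]
  obtain ⟨n, rfl | rfl⟩ := Int.eq_nat_or_neg k
  · simp
  · rw [zpow_neg, zpow_natCast, ← inv_pow, hsq, Int.natAbs_neg, Int.natAbs_natCast]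

lemma frameProd_jacobiSym {b : ℕ} (h : ∀ p ∈ P, (p.1 : ℤ).gcd b = 1) :
    frameProd P (fun n => (J(n | b) : ℂ)) =
      (J(((P.map fun p => p.1 ^ p.2.natAbs).prod : ℕ) | b) : ℤ) := by
  induction P with
  | nil => simp
  | cons p P ih =>
    rw [List.forall_mem_cons] at h
    rw [frameProd_cons, ih h.2, jacobiSym_zpow_eq h.1, List.map_cons, List.prod_cons,
      Nat.cast_mul, jacobiSym.mul_left, Int.cast_mul, Nat.cast_pow]

lemma frameProd_jacobiSym_eq_one {b : ℕ} (h : ∀ p ∈ P, (p.1 : ℤ).gcd b = 1)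
    (hP : IsSquare (P.map fun p => p.1 ^ p.2.natAbs).prod) :
    frameProd P (fun n => (J(n | b) : ℂ)) = 1 := by
  have hne : frameProd P (fun n => (J(n | b) : ℂ)) ≠ 0 :=
    frameProd_ne_zero (f := fun n : ℕ => (J(n | b) : ℂ)) fun p hp =>
      Int.cast_ne_zero.mpr (jacobiSym.ne_zero (h p hp))
  rw [frameProd_jacobiSym h] at hne ⊢
  obtain ⟨r, hr⟩ := hP
  rw [hr, Nat.cast_mul, jacobiSym.mul_left] at hne ⊢
  rcases jacobiSym.trichotomy r b with h | h | h <;> rw [h] at hne ⊢ <;> simp at hne ⊢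

lemma gcd_toNat_eq_one_of_dvd (hdet : a * d - b * (c * N) = 1) (hpos : 0 < d) {n : ℤ}
    (hn : n ∣ c * N) : n.gcd d.toNat = 1 := by
  obtain ⟨m, hm⟩ := hn
  rw [Int.toNat_of_nonneg hpos.le, ← Int.isCoprime_iff_gcd_eq_one]
  exact ⟨-(b * m), a, by rw [← hdet, hm]; ring⟩

/-- The matrix `(a b; cN d)` acts on `nτ` as `(a nb; c(N/n) d)`. The multiplier of the latter is
written so that its dependence on `n` is through powers of fixed numbers and `J(n | d)` only. -/
lemma dedekindEta_natCast_mul_smul {n : ℕ} (hn : 0 < n) (hnN : n ∣ N)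
    (hdet : a * d - b * (c * N) = 1) (hd : Odd d) (hpos : 0 < d) (hτ : 0 < τ.im) :
    dedekindEta (n * ((a * τ + b) / ((c * N : ℤ) * τ + d))) =
      J(n | d.toNat) *
        e2 (((a + d - b * d * (c * N) - 3 * d) * c : ℤ) / 24) ^ ((N / n : ℕ) : ℤ) *
        e2 ((b * d : ℤ) / 24) ^ (n : ℤ) *
        (J(c * N | d.toNat) * e2 ((d - 1) / 8) * Complex.sqrt ((c * N : ℤ) * τ + d)) *
        dedekindEta (n * τ) := by
  obtain ⟨m, rfl⟩ := hnN
  have hlaw := etaLaw (a := a) (b := n * b) (c := c * m) (d := d)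
    (by rw [← hdet]; push_cast; ring) hd hpos _ (im_natCast_mul_pos hn hτ)
  have hden : ((c * m : ℤ) : ℂ) * (n * τ) + d = (c * (n * m : ℕ) : ℤ) * τ + d := by
    push_cast
    ring
  have hnum : ((a : ℂ) * (n * τ) + (n * b : ℤ)) / ((c * (n * m : ℕ) : ℤ) * τ + d) =
      n * ((a * τ + b) / ((c * (n * m : ℕ) : ℤ) * τ + d)) := by
    push_cast
    ring
  rw [hden, hnum] at hlaw
  have hJ : J(c * m | d.toNat) = J(n | d.toNat) * J(c * (n * m : ℕ) | d.toNat) := by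
    rw [show c * ((n * m : ℕ) : ℤ) = c * m * n by push_cast; ring, jacobiSym.mul_left _ n,
      mul_left_comm, ← sq, jacobiSym.sq_one, mul_one]
    exact gcd_toNat_eq_one_of_dvd hdet hpos ⟨c * m, by push_cast; ring⟩
  have hexp : ((etaExponent a (n * b) (c * m) d : ℤ) : ℂ) / 24 =
      (m : ℤ) * (((a + d - b * d * (c * (n * m : ℕ)) - 3 * d) * c : ℤ) / 24) +
        (n : ℤ) * ((b * d : ℤ) / 24) + (d - 1) / 8 := by
    simp only [etaExponent]
    push_cast
    ring
  rw [hlaw, etaMultiplier, hJ, hexp, e2_add, e2_add, e2_intCast_mul, e2_intCast_mul,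
    Nat.mul_div_cancel_left _ hn]
  push_cast
  ring

lemma etaFrame_smul_of_odd_pos (hP : IsLevel N P) (hdet : a * d - b * (c * N) = 1)
    (hd : Odd d) (hpos : 0 < d) (hτ : 0 < τ.im) :
    etaFrame P ((a * τ + b) / ((c * N : ℤ) * τ + d)) = etaFrame P τ := by
  have hgcd : ∀ p ∈ P, (p.1 : ℤ).gcd d.toNat = 1 := fun p hp =>
    gcd_toNat_eq_one_of_dvd hdet hpos ((Int.natCast_dvd_natCast.mpr (hP.dvd p hp)).mul_left c)
  have hconst : (J(c * N | d.toNat) : ℂ) * e2 ((d - 1) / 8) *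
      Complex.sqrt ((c * N : ℤ) * τ + d) ≠ 0 :=
    mul_ne_zero (mul_ne_zero (Int.cast_ne_zero.mpr (jacobiSym.ne_zero
      (gcd_toNat_eq_one_of_dvd hdet hpos dvd_rfl))) (e2_ne_zero _))
      (sqrt_ne_zero (Complex.slitPlane_ne_zero (mul_add_mem_slitPlane _ hpos hτ)))
  rw [etaFrame_eq_frameProd, frameProd_congr
    (f := fun n : ℕ => dedekindEta (n * ((a * τ + b) / ((c * N : ℤ) * τ + d))))
    (g := fun n : ℕ => J(n | d.toNat) *
      e2 (((a + d - b * d * (c * N) - 3 * d) * c : ℤ) / 24) ^ ((N / n : ℕ) : ℤ) *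
      e2 ((b * d : ℤ) / 24) ^ (n : ℤ) *
      (J(c * N | d.toNat) * e2 ((d - 1) / 8) * Complex.sqrt ((c * N : ℤ) * τ + d)) *
      dedekindEta (n * τ))
    fun p hp => dedekindEta_natCast_mul_smul (hP.pos p hp) (hP.dvd p hp) hdet hd hpos hτ]
  simp only [frameProd_mul, frameProd_jacobiSym_eq_one hgcd hP.square,
    frameProd_zpow (e2_ne_zero _), e2_div_zpow _ hP.order_infty, e2_div_zpow _ hP.order_zero,
    frameProd_const hconst, hP.weight, zpow_zero, one_mul]
  rfl

lemma etaFrame_smul_of_odd (hP : IsLevel N P) (hdet : a * d - b * (c * N) = 1) (hd : Odd d)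
    (hτ : 0 < τ.im) : etaFrame P ((a * τ + b) / ((c * N : ℤ) * τ + d)) = etaFrame P τ := by
  rcases lt_trichotomy 0 d with h | rfl | h
  · exact etaFrame_smul_of_odd_pos hP hdet hd h hτ
  · simp at hd
  · rw [← etaFrame_smul_of_odd_pos hP (a := -a) (b := -b) (c := -c) (d := -d)
      (by rw [← hdet]; ring) hd.neg (by linarith) hτ, ← neg_div_neg_eq]
    push_cast
    ring_nf

theorem etaFrame_smul (hP : IsLevel N P) (hdet : a * d - b * (c * N) = 1) (hτ : 0 < τ.im) :
    etaFrame P ((a * τ + b) / ((c * N : ℤ) * τ + d)) = etaFrame P τ := by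
  rcases Int.even_or_odd d with hd | hd
  · have hc : Odd (c * N) := by
      by_contra h
      rw [Int.not_odd_iff_even] at h
      have : Even (1 : ℤ) := hdet ▸ (hd.mul_left a).sub (h.mul_left b)
      simp at this
    have h := etaFrame_smul_of_odd hP (a := a) (b := b + a) (c := c) (d := d + c * N)
      (by rw [← hdet]; ring) (hd.add_odd hc) (τ := τ + (-1 : ℤ)) (by simpa using hτ)
    rw [etaFrame_add_intCast hP.order_infty] at h
    rw [← h]
    congr 1
    push_cast
    ring
  · exact etaFrame_smul_of_odd hP hdet hd hτ

end Level

/-! ### The modulus of eta products -/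

section Modulus

/-- The `SL₂(ℤ)`-invariant function `|η(τ)|⁴ Im τ`. -/
def etaHeight (τ : ℂ) : ℝ := ‖dedekindEta τ‖ ^ 4 * τ.im

lemma etaHeight_add_one (τ : ℂ) : etaHeight (1 + τ) = etaHeight τ := by
  have h := dedekindEta_add_intCast τ 1
  rw [Int.cast_one, add_comm] at h
  rw [etaHeight, etaHeight, h, norm_mul, norm_e2]
  simp

lemma etaHeight_neg_inv {τ : ℂ} (hτ : 0 < τ.im) : etaHeight (-τ)⁻¹ = etaHeight τ := by
  have h0 : ‖τ‖ ≠ 0 := norm_ne_zero_iff.mpr (ne_zero_of_im_pos hτ)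
  have hsqrt : ‖Complex.sqrt (τ / Complex.I)‖ ^ 2 = ‖τ‖ := by
    rw [← norm_pow, sq, sqrt_mul_self, norm_div, Complex.norm_I, div_one]
  have him : (-τ)⁻¹.im = τ.im / ‖τ‖ ^ 2 := by
    rw [Complex.inv_im, Complex.normSq_neg, Complex.normSq_eq_norm_sq, Complex.neg_im, neg_neg]
  rw [etaHeight, etaHeight, him, show (-τ)⁻¹ = -1 / τ by rw [inv_neg, neg_div, one_div],
    dedekindEta_neg_inv hτ, norm_mul, mul_pow, pow_mul _ 2 2, hsqrt]
  field_simp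

lemma etaHeight_smul (γ : SL(2, ℤ)) (τ : ℍ) : etaHeight (γ • τ : ℍ) = etaHeight τ := by
  have hγ : γ ∈ Subgroup.closure {ModularGroup.S, ModularGroup.T} := by
    simp only [SpecialLinearGroup.SL2Z_generators, Subgroup.mem_top]
  induction hγ using Subgroup.closure_induction generalizing τ with
  | mem x hx =>
    rcases hx with rfl | rfl
    · rw [modular_S_smul, coe_mk, etaHeight_neg_inv τ.im_pos]
    · rw [modular_T_smul, coe_vadd, Complex.ofReal_one, etaHeight_add_one]
  | one => rw [one_smul]
  | mul x y _ _ hx hy => rw [mul_smul, hx, hy]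
  | inv x _ hx => rw [← hx (x⁻¹ • τ), smul_inv_smul]

lemma coe_smul_int (g : SL(2, ℤ)) (τ : ℍ) :
    ((g • τ : ℍ) : ℂ) = (g 0 0 * τ + g 0 1) / (g 1 0 * τ + g 1 1) := by
  rw [coe_specialLinearGroup_apply]
  simp

lemma det_int (g : SL(2, ℤ)) : g 0 0 * g 1 1 - g 0 1 * g 1 0 = 1 := by
  rw [← Matrix.det_fin_two, g.det_coe]

lemma exists_diagonal_mul_eq_mul_upperTriangular (g : SL(2, ℤ)) {n : ℕ} (hn : 0 < n) :
    ∃ (γ : SL(2, ℤ)) (r s : ℤ), 0 < r ∧ n = r * (g 1 0).gcd n ∧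
      !![(n : ℤ), 0; 0, 1] * (g : Matrix (Fin 2) (Fin 2) ℤ) =
        γ * !![((g 1 0).gcd n : ℤ), s; 0, r] := by
  have hdet := det_int g
  have hp : 0 < (g 1 0).gcd n := Int.gcd_pos_of_ne_zero_right _ (by exact_mod_cast hn.ne')
  obtain ⟨c, r, hcr, hc, hr⟩ := Int.exists_gcd_one hp
  generalize (g 1 0).gcd n = p at *
  have hr0 : 0 < r := by
    refine pos_of_mul_pos_left (b := (p : ℤ)) ?_ (by positivity)
    rw [← hr]
    exact_mod_cast hn
  have hcop : IsCoprime (r * g 0 0) c := by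
    refine (Int.isCoprime_iff_gcd_eq_one.mpr hcr).symm.mul_left ⟨g 1 1, -g 0 1 * p, ?_⟩
    linear_combination hdet + g 0 1 * hc
  obtain ⟨u, v, huv⟩ := hcop
  refine ⟨⟨!![r * g 0 0, -v; c, u], ?_⟩, r, u * n * g 0 1 + v * g 1 1, hr0, hr, ?_⟩
  · rw [Matrix.det_fin_two_of]
    linear_combination huv
  · refine (congrArg _ (Matrix.eta_fin_two _)).trans ?_
    rw [Matrix.mul_fin_two, Matrix.mul_fin_two]
    congrm !![?_, ?_; ?_, ?_]
    · linear_combination g 0 0 * hr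
    · linear_combination (-g 0 1 * n : ℤ) * huv - r * v * hdet - v * g 0 1 * r * hc +
        g 0 1 * v * c * hr
    · linear_combination hc
    · linear_combination (-g 1 1 : ℤ) * huv + u * r * hdet + u * g 0 1 * r * hc -
        u * g 0 1 * c * hr

lemma exists_natCast_mul_smul_eq (g : SL(2, ℤ)) {n : ℕ} (hn : 0 < n) :
    ∃ (γ : SL(2, ℤ)) (u : ℍ → ℍ), ∀ z : ℍ, (n : ℂ) * (g • z : ℍ) = (γ • u z : ℍ) ∧
      (u z).im = ((g 1 0).gcd n : ℝ) ^ 2 / n * z.im := by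
  obtain ⟨γ, r, s, hr0, hr, hγ⟩ := exists_diagonal_mul_eq_mul_upperTriangular g hn
  have hp : 0 < (g 1 0).gcd n := Int.gcd_pos_of_ne_zero_right _ (by exact_mod_cast hn.ne')
  generalize (g 1 0).gcd n = p at *
  have hrC : (r : ℂ) ≠ 0 := by exact_mod_cast hr0.ne'
  have him (z : ℍ) : ((p * z + s) / (r : ℝ) : ℂ).im = (p : ℝ) ^ 2 / n * z.im := by
    have hrR : (r : ℝ) ≠ 0 := by exact_mod_cast hr0.ne'
    have hnR : (n : ℝ) = r * p := by exact_mod_cast hr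
    rw [Complex.div_ofReal_im, Complex.add_im, Complex.intCast_im, add_zero,
      ← Complex.ofReal_natCast, Complex.im_ofReal_mul, hnR, coe_im]
    field_simp
  refine ⟨γ, fun z => ⟨_, (him z).symm ▸ by have := z.im_pos; positivity⟩, fun z => ⟨?_, him z⟩⟩
  have hentry (i j : Fin 2) := congrArg (Int.cast : ℤ → ℂ) (congrFun₂ hγ i j)
  simp only [Matrix.mul_apply, Fin.sum_univ_two] at hentry
  have h00 : (n : ℂ) * g 0 0 = γ 0 0 * p := by simpa using hentry 0 0
  have h01 : (n : ℂ) * g 0 1 = γ 0 0 * s + γ 0 1 * r := by simpa using hentry 0 1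
  have h10 : (g 1 0 : ℂ) = γ 1 0 * p := by simpa using hentry 1 0
  have h11 : (g 1 1 : ℂ) = γ 1 0 * s + γ 1 1 * r := by simpa using hentry 1 1
  have hnum : (γ 0 0 : ℂ) * ((p * z + s) / r) + γ 0 1 = n * (g 0 0 * z + g 0 1) / r := by
    field_simp
    linear_combination -(z : ℂ) * h00 - h01
  have hden : (γ 1 0 : ℂ) * ((p * z + s) / r) + γ 1 1 = (g 1 0 * z + g 1 1) / r := by
    field_simp
    linear_combination -(z : ℂ) * h10 - h11
  rw [coe_smul_int, coe_smul_int, ← mul_div_assoc, ← div_div_div_cancel_right₀ hrC, ← hnum, ← hden]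
  simp

lemma exists_tendsto_norm_dedekindEta_smul (g : SL(2, ℤ)) {n : ℕ} (hn : 0 < n) :
    ∃ C : ℝ, C ≠ 0 ∧ Tendsto (fun z : ℍ => ‖dedekindEta (n * (g • z : ℍ))‖ ^ 4 *
      ((g • z).im / z.im) * Real.exp (Real.pi / 3 * z.im * (((g 1 0).gcd n : ℝ) ^ 2 / n)))
      atImInfty (𝓝 C) := by
  obtain ⟨γ, u, hu⟩ := exists_natCast_mul_smul_eq g hn
  have hk : 0 < ((g 1 0).gcd n : ℝ) ^ 2 / n := by
    have := Int.gcd_pos_of_ne_zero_right (g 1 0) (by exact_mod_cast hn.ne' : (n : ℤ) ≠ 0)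
    positivity
  generalize ((g 1 0).gcd n : ℝ) ^ 2 / n = k at *
  have hterm (z : ℍ) : ‖dedekindEta (n * (g • z : ℍ))‖ ^ 4 * ((g • z).im / z.im) *
      Real.exp (Real.pi / 3 * z.im * k) = k / n * ‖eulerProduct (e2 (u z))‖ ^ 4 := by
    have hheight := etaHeight_smul γ (u z)
    rw [← (hu z).1, etaHeight, etaHeight, ← Complex.ofReal_natCast, Complex.im_ofReal_mul,
      Complex.ofReal_natCast, coe_im, coe_im, (hu z).2, dedekindEta_eq_e2_mul_eulerProduct (u z),
      norm_mul, norm_e2, mul_pow, ← Real.exp_nat_mul, Complex.div_ofNat_im, coe_im,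
      (hu z).2] at hheight
    have hexp : Real.exp (Real.pi / 3 * z.im * k) *
        Real.exp ((4 : ℕ) * (-2 * Real.pi * (k * z.im / 24))) = 1 := by
      rw [← Real.exp_add, Real.exp_eq_one_iff]
      push_cast
      ring
    have := z.im_pos
    generalize Real.exp (Real.pi / 3 * z.im * k) = X at *
    generalize Real.exp ((4 : ℕ) * (-2 * Real.pi * (k * z.im / 24))) = Y at *
    field_simp
    linear_combination X * hheight + k * z.im * ‖eulerProduct (e2 (u z))‖ ^ 4 * hexp
  have hlim : Tendsto u atImInfty atImInfty := by
    rw [atImInfty, tendsto_comap_iff]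
    exact (Tendsto.const_mul_atTop hk tendsto_comap).congr fun z => (hu z).2.symm
  have heuler : Tendsto (fun z => eulerProduct (e2 (u z))) atImInfty (𝓝 1) := by
    rw [← eulerProduct_zero]
    exact analyticAt_eulerProduct.continuousAt.tendsto.comp (tendsto_e2_atImInfty.comp hlim)
  refine ⟨k / n, by positivity, ?_⟩
  simpa only [hterm, norm_one, one_pow, mul_one] using (heuler.norm.pow 4).const_mul (k / n)

lemma exists_tendsto_norm_etaFrame_smul (g : SL(2, ℤ)) (hP : ∀ p ∈ P, 0 < p.1)
    (hw : frameSum P (1 : ℕ → ℤ) = 0) :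
    ∃ C : ℝ, C ≠ 0 ∧ Tendsto (fun z : ℍ => ‖etaFrame P (g • z : ℍ)‖ ^ 4 *
      Real.exp (Real.pi / 3 * z.im * frameSum P fun n => ((g 1 0).gcd n : ℝ) ^ 2 / n))
      atImInfty (𝓝 C) := by
  have hex (n : ℕ) := exists_tendsto_norm_dedekindEta_smul g (n := n)
  choose! C hC0 hC using hex
  refine ⟨frameProd P C, frameProd_ne_zero fun p hp => hC0 _ (hP p hp),
    (tendsto_frameProd (f := fun (z : ℍ) n => ‖dedekindEta (n * (g • z : ℍ))‖ ^ 4 *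
      ((g • z).im / z.im) * Real.exp (Real.pi / 3 * z.im * (((g 1 0).gcd n : ℝ) ^ 2 / n)))
      (fun p hp => hC _ (hP p hp)) fun p hp => hC0 _ (hP p hp)).congr fun z => ?_⟩
  have hz : (g • z).im / z.im ≠ 0 := (div_pos (g • z).im_pos z.im_pos).ne'
  rw [frameProd_mul, frameProd_mul, frameProd_const hz, hw, zpow_zero, mul_one, frameProd_pow,
    ← norm_frameProd, ← exp_frameSum, frameSum_mul_left, etaFrame_eq_frameProd]

lemma isBoundedAtImInfty_etaFrame_inv_smul (g : SL(2, ℤ)) (hP : ∀ p ∈ P, 0 < p.1)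
    (hw : frameSum P (1 : ℕ → ℤ) = 0)
    (hg : (frameSum P fun n => ((g 1 0).gcd n : ℝ) ^ 2 / n) ≤ 0) :
    IsBoundedAtImInfty fun z : ℍ => (etaFrame P (g • z : ℍ))⁻¹ := by
  obtain ⟨C, hC, h⟩ := exists_tendsto_norm_etaFrame_smul g hP hw
  generalize (frameSum P fun n => ((g 1 0).gcd n : ℝ) ^ 2 / n) = κ at hg h
  have hexp : (fun z : ℍ => Real.exp (Real.pi / 3 * z.im * κ)) =O[atImInfty]
      (1 : ℍ → ℝ) := by
    refine Asymptotics.IsBigO.of_bound 1 (Eventually.of_forall fun z => ?_)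
    have := z.im_pos
    simpa using mul_nonpos_of_nonneg_of_nonpos (by positivity) hg
  refine Asymptotics.IsBigO.of_pow (n := 4) (by norm_num) ?_
  refine ((hexp.mul ((h.inv₀ hC).isBigO_one ℝ)).congr (fun z => ?_) fun z => ?_).of_norm_left
  · rw [Pi.pow_apply, norm_pow, norm_inv, mul_inv, mul_left_comm,
      mul_inv_cancel₀ (Real.exp_ne_zero _), mul_one, inv_pow]
  · simp

end Modulus

/-! ### The groups `Γ₀(N)+S` -/

/-- The product `e ∗ f` of exact divisors of an integer. For an arbitrary divisor `n` of `N`, the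
map `n ↦ n ∗ e` is the action of `W_N(e)` on the factors `η(nτ)` of an eta product. -/
def exactMul (e f : ℕ) : ℕ := e * f / e.gcd f ^ 2

section AtkinLehner

variable {N e f : ℕ} {a b c d : ℤ} {g h : SL(2, ℝ)}

lemma exists_eq_mul_and_exactMul_eq (he0 : 0 < e) (he : e ∣ N) (hf : f ∣ N) :
    ∃ r e₁ f₁ m : ℕ, 0 < r ∧ e = e₁ * r ∧ f = f₁ * r ∧ N = r * e₁ * f₁ * m ∧
      exactMul e f = e₁ * f₁ := by
  obtain ⟨m, hm⟩ := Nat.lcm_dvd he hf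
  obtain ⟨e₁, f₁, -, he₁, hf₁⟩ := Nat.exists_coprime e f
  have hlcm := Nat.gcd_mul_lcm e f
  have hr : 0 < e.gcd f := Nat.gcd_pos_of_pos_left _ he0
  rw [exactMul]
  generalize e.gcd f = r at *
  refine ⟨r, e₁, f₁, m, hr, he₁, hf₁, ?_, ?_⟩
  · rw [hm]
    congr 1
    apply Nat.eq_of_mul_eq_mul_left hr
    rw [hlcm, he₁, hf₁]
    ring
  · rw [he₁, hf₁]
    exact Nat.div_eq_of_eq_mul_left (by positivity) (by ring)

lemma exactMul_self (he : 0 < e) : exactMul e e = 1 := by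
  rw [exactMul, Nat.gcd_self, sq, Nat.div_self (by positivity)]

/-- The matrix `g` is `(1/√e)[[ae, b],[cN, de]]`. -/
structure IsAtkinLehner (N e : ℕ) (a b c d : ℤ) (g : SL(2, ℝ)) : Prop where
  apply_zero_zero : √e * g 0 0 = a * e
  apply_zero_one : √e * g 0 1 = b
  apply_one_zero : √e * g 1 0 = c * N
  apply_one_one : √e * g 1 1 = d * e

/-- The Atkin-Lehner coset `W_N(e)`. -/
def atkinLehnerCoset (N e : ℕ) : Set SL(2, ℝ) := {g | ∃ a b c d, IsAtkinLehner N e a b c d g}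

lemma sqrt_natCast_pos (he : 0 < e) : 0 < √(e : ℝ) := Real.sqrt_pos.mpr (by exact_mod_cast he)

lemma coe_smul_real (g : SL(2, ℝ)) (τ : ℍ) :
    ((g • τ : ℍ) : ℂ) = (g 0 0 * τ + g 0 1) / (g 1 0 * τ + g 1 1) := by
  rw [coe_specialLinearGroup_apply]
  simp

namespace IsAtkinLehner

lemma det_eq (hg : IsAtkinLehner N e a b c d g) (he0 : 0 < e) (he : e ∣ N) :
    a * d * e - b * c * (N / e : ℕ) = 1 := by
  obtain ⟨m, rfl⟩ := he
  rw [Nat.mul_div_cancel_left _ he0]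
  have heR : (e : ℝ) ≠ 0 := by exact_mod_cast he0.ne'
  have hsq : √(e : ℝ) * √e = e := Real.mul_self_sqrt (Nat.cast_nonneg e)
  have hdet := g.det_coe
  rw [Matrix.det_fin_two] at hdet
  have hmul : (a * e : ℝ) * (d * e) - b * (c * (e * m : ℕ)) = e := by
    rw [← hg.apply_zero_zero, ← hg.apply_one_one, ← hg.apply_zero_one, ← hg.apply_one_zero]
    linear_combination (√(e : ℝ) * √e) * hdet + hsq
  have : (a : ℝ) * d * e - b * c * m = 1 := by
    apply mul_left_cancel₀ heR
    push_cast at hmul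
    linear_combination hmul
  exact_mod_cast this

lemma coe_smul (hg : IsAtkinLehner N e a b c d g) (he0 : 0 < e) (τ : ℍ) :
    ((g • τ : ℍ) : ℂ) = (a * e * τ + b) / (c * N * τ + d * e) := by
  have hs : ((√(e : ℝ) : ℝ) : ℂ) ≠ 0 := by exact_mod_cast (sqrt_natCast_pos he0).ne'
  have h00 : ((√(e : ℝ) : ℝ) : ℂ) * g 0 0 = a * e := by exact_mod_cast hg.apply_zero_zero
  have h01 : ((√(e : ℝ) : ℝ) : ℂ) * g 0 1 = b := by exact_mod_cast hg.apply_zero_one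
  have h10 : ((√(e : ℝ) : ℝ) : ℂ) * g 1 0 = c * N := by exact_mod_cast hg.apply_one_zero
  have h11 : ((√(e : ℝ) : ℝ) : ℂ) * g 1 1 = d * e := by exact_mod_cast hg.apply_one_one
  rw [coe_smul_real, ← mul_div_mul_left _ _ hs, mul_add, mul_add, ← mul_assoc, ← mul_assoc, h00,
    h01, h10, h11]

lemma inv (hg : IsAtkinLehner N e a b c d g) : IsAtkinLehner N e d (-b) (-c) a g⁻¹ := by
  obtain ⟨h00, h01, h10, h11⟩ := hg
  constructor <;> simp [Matrix.SpecialLinearGroup.coe_inv, Matrix.adjugate_fin_two, *]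

end IsAtkinLehner

lemma exists_isAtkinLehner (he0 : 0 < e) (he : e ∣ N) (hdet : a * d * e - b * c * (N / e : ℕ) = 1) :
    ∃ g, IsAtkinLehner N e a b c d g := by
  obtain ⟨m, rfl⟩ := he
  rw [Nat.mul_div_cancel_left _ he0] at hdet
  have hs := (sqrt_natCast_pos he0).ne'
  have hsq : √(e : ℝ) ^ 2 = e := Real.sq_sqrt (Nat.cast_nonneg e)
  have heR : (e : ℝ) ≠ 0 := by exact_mod_cast he0.ne'
  have hdetR : (a : ℝ) * d * e - b * c * m = 1 := by exact_mod_cast hdet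
  refine ⟨⟨(√(e : ℝ))⁻¹ • !![(a : ℝ) * e, (b : ℝ); (c : ℝ) * (e * m : ℕ), (d : ℝ) * e], ?_⟩,
    ?_, ?_, ?_, ?_⟩
  · rw [Matrix.det_smul, Fintype.card_fin, inv_pow, hsq, Matrix.det_fin_two_of]
    push_cast
    field_simp
    linear_combination hdetR
  all_goals simp [mul_inv_cancel_left₀ hs]

lemma one_mem_atkinLehnerCoset (N : ℕ) : 1 ∈ atkinLehnerCoset N 1 :=
  ⟨1, 0, 0, 1, by constructor <;> simp⟩

lemma inv_mem_atkinLehnerCoset (hg : g ∈ atkinLehnerCoset N e) : g⁻¹ ∈ atkinLehnerCoset N e := by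
  obtain ⟨a, b, c, d, hg⟩ := hg
  exact ⟨_, _, _, _, hg.inv⟩

lemma mul_mem_atkinLehnerCoset (he0 : 0 < e) (he : e ∣ N) (hf : f ∣ N)
    (hg : g ∈ atkinLehnerCoset N e) (hh : h ∈ atkinLehnerCoset N f) :
    g * h ∈ atkinLehnerCoset N (exactMul e f) := by
  obtain ⟨a, b, c, d, h00, h01, h10, h11⟩ := hg
  obtain ⟨a', b', c', d', k00, k01, k10, k11⟩ := hh
  obtain ⟨r, e₁, f₁, m, hr, rfl, rfl, rfl, hmul⟩ := exists_eq_mul_and_exactMul_eq he0 he hf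
  have hrR : (0 : ℝ) < r := by exact_mod_cast hr
  have hsq : √((e₁ * r : ℕ) : ℝ) * √(f₁ * r : ℕ) = r * √((e₁ * f₁ : ℕ) : ℝ) := by
    rw [← Real.sqrt_mul (by positivity), ← Real.sqrt_sq hrR.le, ← Real.sqrt_mul (by positivity)]
    push_cast
    ring_nf
  rw [hmul]
  refine ⟨a * a' * r + b * c' * m, a * e₁ * b' + b * d' * f₁, c * a' * f₁ + d * e₁ * c',
    c * b' * m + d * d' * r, ?_⟩
  constructor
  all_goals
    apply mul_left_cancel₀ hrR.ne'
    rw [← mul_assoc, ← hsq, Matrix.SpecialLinearGroup.coe_mul, Matrix.mul_apply, Fin.sum_univ_two,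
      show ∀ s t x y z w : ℝ, s * t * (x * y + z * w) = s * x * (t * y) + s * z * (t * w) by
        intros; ring]
    simp only [h00, h01, h10, h11, k00, k01, k10, k11]
    push_cast
    ring

lemma isClosed_atkinLehnerCoset (he : e ≠ 0) (hN : N ≠ 0) : IsClosed (atkinLehnerCoset N e) := by
  have hmultiples {x : ℝ} (hx : x ≠ 0) : IsClosed {y : ℝ | ∃ n : ℤ, y = n * x} := by
    have : {y : ℝ | ∃ n : ℤ, y = n * x} = (fun y => y / x) ⁻¹' range ((↑) : ℤ → ℝ) := by
      ext y
      simp only [mem_ofPred_eq, mem_preimage, mem_range]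
      exact exists_congr fun n => by rw [eq_comm, eq_div_iff hx]
    rw [this]
    exact Int.isClosedEmbedding_coe_real.isClosed_range.preimage (by fun_prop)
  have hentry (i j : Fin 2) : Continuous fun g : SL(2, ℝ) => √(e : ℝ) * g i j :=
    continuous_const.mul ((continuous_id.matrix_elem i j).comp continuous_subtype_val)
  have heR : (e : ℝ) ≠ 0 := by exact_mod_cast he
  have hNR : (N : ℝ) ≠ 0 := by exact_mod_cast hN
  convert (((hmultiples heR).preimage (hentry 0 0)).inter ((hmultiples one_ne_zero).preimage
    (hentry 0 1))).inter (((hmultiples hNR).preimage (hentry 1 0)).inter ((hmultiples heR).preimage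
    (hentry 1 1)))
  ext g
  constructor
  · rintro ⟨a, b, c, d, h00, h01, h10, h11⟩
    exact ⟨⟨⟨a, h00⟩, b, h01.trans (mul_one _).symm⟩, ⟨c, h10⟩, d, h11⟩
  · rintro ⟨⟨⟨a, h00⟩, b, h01⟩, ⟨c, h10⟩, d, h11⟩
    exact ⟨a, b, c, d, h00, h01.trans (mul_one _), h10, h11⟩

lemma map_mem_atkinLehnerCoset_one {g : SL(2, ℤ)} (hg : g ∈ CongruenceSubgroup.Gamma0 N) :
    Matrix.SpecialLinearGroup.map (Int.castRingHom ℝ) g ∈ atkinLehnerCoset N 1 := by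
  obtain ⟨c, hc⟩ := (ZMod.intCast_zmod_eq_zero_iff_dvd _ N).mp (CongruenceSubgroup.Gamma0_mem.mp hg)
  exact ⟨g 0 0, g 0 1, c, g 1 1, by constructor <;> simp [hc, mul_comm]⟩

lemma map_smul (g : SL(2, ℤ)) (z : ℍ) :
    Matrix.SpecialLinearGroup.map (Int.castRingHom ℝ) g • z = g • z := by
  ext
  rw [coe_smul_real, coe_smul_int]
  simp

/-- For an exact divisor `e` of `N`, the cusps `x / y` with `gcd(y, N) = N / e` are the images of
`i∞` under `W_N(e)`. -/
lemma exists_mem_atkinLehnerCoset_smul_eq (hN : 0 < N) (hco : e.Coprime (N / e)) (g : SL(2, ℤ))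
    (hg : (g 1 0).gcd N * e = N) :
    ∃ γ ∈ atkinLehnerCoset N e, ∃ t : ℤ, ∀ z w : ℍ, (e * w : ℂ) = z + t → γ • w = g • z := by
  have he0 : 0 < e := Nat.pos_of_mul_pos_left (hg ▸ hN)
  have hdiv : N / e = (g 1 0).gcd N := Nat.div_eq_of_eq_mul_left he0 hg.symm
  have hdet := det_int g
  rw [hdiv] at hco
  obtain ⟨c, hc⟩ := Int.gcd_dvd_left (g 1 0) (N : ℤ)
  have hm0 : 0 < (g 1 0).gcd N := Nat.pos_of_mul_pos_right (hg ▸ hN)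
  have hce : IsCoprime (e : ℤ) c := by
    rw [isCoprime_comm, Int.isCoprime_iff_gcd_eq_one]
    have hmul := Int.gcd_mul_left ((g 1 0).gcd N : ℕ) c e
    rw [← hc, ← Nat.cast_mul, hg, Int.natAbs_natCast] at hmul
    exact (Nat.eq_of_mul_eq_mul_left hm0 (by rw [mul_one]; exact hmul)).symm
  have hcop : IsCoprime (g 0 0 * e) (g 1 0) := by
    refine IsCoprime.mul_left ⟨g 1 1, -g 0 1, by linear_combination hdet⟩ ?_
    rw [hc]
    exact (Nat.isCoprime_iff_coprime.mpr hco).mul_right hce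
  obtain ⟨x, y, hxy⟩ := hcop
  obtain ⟨γ, hγ⟩ := exists_isAtkinLehner (N := N) (a := g 0 0) (b := -y) (c := c) (d := x) he0
    (Dvd.intro_left _ hg) (by rw [hdiv]; linear_combination hxy - y * hc)
  refine ⟨γ, ⟨_, _, _, _, hγ⟩, x * e * g 0 1 + y * g 1 1, fun z w hw => ?_⟩
  have hgN : ((g 1 0).gcd N * e : ℤ) = N := by exact_mod_cast hg
  have hcN : (c * N : ℂ) = g 1 0 * e := by
    have : c * N = g 1 0 * e := by linear_combination -c * hgN - e * hc
    exact_mod_cast this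
  have hdetC : (g 0 0 * g 1 1 - g 0 1 * g 1 0 : ℂ) = 1 := by exact_mod_cast hdet
  have hxyC : (x * (g 0 0 * e) + y * g 1 0 : ℂ) = 1 := by exact_mod_cast hxy
  push_cast at hw
  ext
  rw [hγ.coe_smul he0, coe_smul_int, hcN]
  push_cast
  congr 1
  · linear_combination (g 0 0 : ℂ) * hw + g 0 1 * hxyC + y * hdetC
  · linear_combination (g 1 0 : ℂ) * hw + g 1 1 * hxyC - x * e * hdetC

end AtkinLehner

/-- `S` is a group of exact divisors of `N`. -/
structure IsExactDivisorGroup (N : ℕ) (S : Set ℕ) : Prop where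
  pos : 0 < N
  one_mem : 1 ∈ S
  dvd : ∀ e ∈ S, e ∣ N
  coprime : ∀ e ∈ S, e.Coprime (N / e)
  mul_mem : ∀ e ∈ S, ∀ f ∈ S, exactMul e f ∈ S

section GroupStructure

variable {N : ℕ} {S : Set ℕ}

lemma IsExactDivisorGroup.pos_of_mem (hS : IsExactDivisorGroup N S) {e : ℕ} (he : e ∈ S) : 0 < e :=
  Nat.pos_of_dvd_of_pos (hS.dvd e he) hS.pos

lemma IsExactDivisorGroup.finite (hS : IsExactDivisorGroup N S) : S.Finite :=
  (Set.finite_Iic N).subset fun e he => Nat.le_of_dvd hS.pos (hS.dvd e he)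

lemma GammaPlus_eq_biUnion (hS : IsExactDivisorGroup N S) :
    GammaPlus N S = ⋃ e ∈ S, atkinLehnerCoset N e := by
  ext g
  simp only [mem_iUnion, exists_prop]
  refine exists_congr fun e => and_congr_right fun he => exists_congr fun a => exists_congr fun b =>
    exists_congr fun c => exists_congr fun d => ?_
  have he0 := hS.pos_of_mem he
  have hs := (sqrt_natCast_pos he0).ne'
  constructor
  · rintro ⟨-, hg⟩
    constructor <;> simp [hg, mul_inv_cancel_left₀ hs]
  · refine fun hg => ⟨by exact_mod_cast hg.det_eq he0 (hS.dvd e he), ?_⟩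
    rw [eq_inv_smul_iff₀ hs, Matrix.eta_fin_two (√(e : ℝ) • _)]
    simp [hg.apply_zero_zero, hg.apply_zero_one, hg.apply_one_zero, hg.apply_one_one]

lemma mem_GammaPlus_iff (hS : IsExactDivisorGroup N S) {g : SL(2, ℝ)} :
    g ∈ GammaPlus N S ↔ ∃ e ∈ S, g ∈ atkinLehnerCoset N e := by
  rw [GammaPlus_eq_biUnion hS]
  simp only [mem_iUnion, exists_prop]

lemma isClosed_GammaPlus (hS : IsExactDivisorGroup N S) : IsClosed (GammaPlus N S) := by
  rw [GammaPlus_eq_biUnion hS]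
  exact hS.finite.isClosed_biUnion fun e he =>
    isClosed_atkinLehnerCoset (hS.pos_of_mem he).ne' hS.pos.ne'

/-- `Γ₀(N)+S` as a subgroup of `SL₂(ℝ)`. -/
def gammaPlus (hS : IsExactDivisorGroup N S) : Subgroup SL(2, ℝ) where
  carrier := GammaPlus N S
  one_mem' := (mem_GammaPlus_iff hS).mpr ⟨1, hS.one_mem, one_mem_atkinLehnerCoset N⟩
  mul_mem' := by
    simp only [mem_GammaPlus_iff hS]
    rintro g h ⟨e, he, hg⟩ ⟨f, hf, hh⟩
    exact ⟨_, hS.mul_mem e he f hf,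
      mul_mem_atkinLehnerCoset (hS.pos_of_mem he) (hS.dvd e he) (hS.dvd f hf) hg hh⟩
  inv_mem' := by
    simp only [mem_GammaPlus_iff hS]
    rintro g ⟨e, he, hg⟩
    exact ⟨e, he, inv_mem_atkinLehnerCoset hg⟩

lemma map_mem_gammaPlus (hS : IsExactDivisorGroup N S) {g : SL(2, ℤ)}
    (hg : g ∈ CongruenceSubgroup.Gamma0 N) :
    Matrix.SpecialLinearGroup.map (Int.castRingHom ℝ) g ∈ gammaPlus hS :=
  (mem_GammaPlus_iff hS).mpr ⟨1, hS.one_mem, map_mem_atkinLehnerCoset_one hg⟩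

lemma orbitRel_of_eq_add_intCast (hS : IsExactDivisorGroup N S) {x y : ℍ} {n : ℤ}
    (h : (x : ℂ) = y + n) : MulAction.orbitRel (gammaPlus hS) ℍ x y := by
  refine orbitRel_iff.mpr ⟨_, map_mem_gammaPlus hS (g := ModularGroup.T ^ (-n)) ?_, ?_⟩
  · rw [CongruenceSubgroup.Gamma0_mem, ModularGroup.coe_T_zpow]
    simp
  · rw [map_smul]
    ext
    rw [modular_T_zpow_smul, coe_vadd, h]
    push_cast
    ring

lemma exists_tendsto_orbitRel_of_gcd_mul_eq (hS : IsExactDivisorGroup N S) {e : ℕ} (he : e ∈ S)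
    (g : SL(2, ℤ)) (hg : (g 1 0).gcd N * e = N) :
    ∃ u : ℍ → ℍ, Tendsto u atImInfty atImInfty ∧
      ∀ z, MulAction.orbitRel (gammaPlus hS) ℍ (u z) (g • z) := by
  obtain ⟨γ, hγ, t, h⟩ := exists_mem_atkinLehnerCoset_smul_eq hS.pos (hS.coprime e he) g hg
  have heR : (0 : ℝ) < e := by exact_mod_cast hS.pos_of_mem he
  have him (z : ℍ) : ((z + t) / (e : ℝ) : ℂ).im = z.im / e := by
    rw [Complex.div_ofReal_im, Complex.add_im, Complex.intCast_im, add_zero, coe_im]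
  refine ⟨fun z => ⟨_, (him z).symm ▸ div_pos z.im_pos heR⟩, ?_, fun z =>
    orbitRel_iff.mpr ⟨γ, (mem_GammaPlus_iff hS).mpr ⟨e, he, hγ⟩, h z _ ?_⟩⟩
  · rw [atImInfty, tendsto_comap_iff]
    exact (tendsto_comap.atTop_div_const heR).congr fun z => (him z).symm
  · exact mul_div_cancel₀ _ (by exact_mod_cast heR.ne')

lemma isCuspCover_gammaPlus (hS : IsExactDivisorGroup N S) :
    IsCuspCover (MulAction.orbitRel (gammaPlus hS) ℍ)
      fun (i : SL(2, ℤ) ⧸ CongruenceSubgroup.Gamma0 N) z => i.out⁻¹ • z where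
  continuous i := continuous_const_smul (Matrix.SpecialLinearGroup.mapGL ℝ i.out⁻¹)
  exists_rel τ := by
    obtain ⟨g, hg⟩ := ModularGroup.exists_smul_mem_fd τ
    obtain ⟨γ, hγ⟩ := QuotientGroup.mk_out_eq_mul (CongruenceSubgroup.Gamma0 N) g
    refine ⟨g, g • τ, ⟨hg.2, ?_⟩,
      Setoid.symm' _ (orbitRel_iff.mpr ⟨_, map_mem_gammaPlus hS γ.2, ?_⟩)⟩
    · have h₁ := ModularGroup.three_le_four_mul_im_sq_of_mem_fd hg
      have h₂ := (g • τ).im_pos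
      nlinarith
    · rw [hγ, mul_inv_rev, map_smul, smul_smul, smul_smul]
      simp

end GroupStructure

/-! ### Invariance of eta products -/

section Functions

variable {T : ℍ → ℂ} {N e f : ℕ} {g h w : SL(2, ℝ)} {χ : ℂ}

lemma mdifferentiable_comp_smul (hT : MDifferentiable 𝓘(ℂ) 𝓘(ℂ) T) (g : SL(2, ℝ)) :
    MDifferentiable 𝓘(ℂ) 𝓘(ℂ) fun τ : ℍ => T (g • τ) :=
  hT.comp (mdifferentiable_smul (g := Matrix.SpecialLinearGroup.mapGL ℝ g) (by simp))

lemma exists_eq_const_mul_of_norm_eq {F : ℍ → ℂ} (hF : MDifferentiable 𝓘(ℂ) 𝓘(ℂ) F)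
    (hT : MDifferentiable 𝓘(ℂ) 𝓘(ℂ) T) (hne : ∀ τ, T τ ≠ 0) (h : ∀ τ, ‖F τ‖ = ‖T τ‖) :
    ∃ χ : ℂ, ∀ τ, F τ = χ * T τ := by
  have hquot : MDifferentiable 𝓘(ℂ) 𝓘(ℂ) fun τ => F τ / T τ := by
    rw [UpperHalfPlane.mdifferentiable_iff] at hF hT ⊢
    exact hF.div hT fun x _ => hne _
  by_contra hχ
  have hopen : IsOpenMap fun τ => F τ / T τ := isOpenMap_of_mdifferentiable hquot fun ⟨c, hc⟩ =>
    hχ ⟨c, fun τ => by rw [← hc τ, div_mul_cancel₀ _ (hne τ)]⟩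
  have hsphere : range (fun τ => F τ / T τ) ⊆ Metric.sphere 0 1 := by
    rintro _ ⟨τ, rfl⟩
    simp [h τ, hne τ]
  have hinterior := interior_maximal hsphere hopen.isOpen_range
  rw [interior_sphere'] at hinterior
  exact hinterior (mem_range_self UpperHalfPlane.I)

lemma exists_smul_eq_self (h : w 1 1 = -w 0 0) (hpos : 0 < w 1 0) : ∃ τ : ℍ, w • τ = τ := by
  have hdet := w.det_coe
  rw [Matrix.det_fin_two, h] at hdet
  have hc : ((w 1 0 : ℝ) : ℂ) ≠ 0 := by exact_mod_cast hpos.ne'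
  have hdetC : (w 0 0 : ℂ) * (-w 0 0) - w 0 1 * w 1 0 = 1 := by exact_mod_cast hdet
  refine ⟨⟨(w 0 0 + Complex.I) / w 1 0, ?_⟩, ?_⟩
  · rw [Complex.div_ofReal_im]
    simp [hpos]
  · ext
    rw [coe_smul_real, h]
    push_cast
    rw [mul_div_cancel₀ _ hc, add_neg_cancel_comm, div_eq_div_iff Complex.I_ne_zero hc]
    field_simp
    linear_combination -hdetC + (-1 : ℂ) * Complex.I_sq

lemma eq_one_of_smul_eq_self (hχ : ∀ τ, T (w • τ) = χ * T τ) {τ : ℍ} (hτ : w • τ = τ)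
    (hne : T τ ≠ 0) : χ = 1 :=
  (mul_eq_right₀ hne).mp (by rw [← hχ, hτ])

/-- Here `w` is parabolic and fixes the cusp `γ • i∞`. -/
lemma eq_one_of_smul_eq_smul_vadd (hχ : ∀ τ, T (w • τ) = χ * T τ) {γ : SL(2, ℤ)} {t : ℝ}
    (hw : ∀ z : ℍ, w • γ • z = γ • (t +ᵥ z)) {L : ℂ} (hL0 : L ≠ 0)
    (hL : Tendsto (fun z : ℍ => T (γ • z)) atImInfty (𝓝 L)) : χ = 1 := by
  have hshift : Tendsto (fun z : ℍ => t +ᵥ z) atImInfty atImInfty := by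
    rw [atImInfty, tendsto_comap_iff]
    exact tendsto_comap.congr fun z => (vadd_im t z).symm
  have hlim : Tendsto (fun z : ℍ => χ * T (γ • z)) atImInfty (𝓝 L) :=
    (hL.comp hshift).congr fun z => by rw [Function.comp_apply, ← hw, hχ]
  exact (mul_eq_right₀ hL0).mp (tendsto_nhds_unique (hL.const_mul χ) hlim)

/-- `T` is fixed by some element of the Atkin-Lehner coset `W_N(e)`. When `T` is invariant under
`Γ₀(N)` it is then fixed by the whole coset. -/
def IsInvariant (N e : ℕ) (T : ℍ → ℂ) : Prop :=
  ∃ w ∈ atkinLehnerCoset N e, ∀ τ : ℍ, T (w • τ) = T τ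

lemma isInvariant_one (N : ℕ) (T : ℍ → ℂ) : IsInvariant N 1 T :=
  ⟨1, one_mem_atkinLehnerCoset N, fun τ => by rw [one_smul]⟩

lemma IsInvariant.mul (he0 : 0 < e) (he : e ∣ N) (hf : f ∣ N) (h : IsInvariant N e T)
    (k : IsInvariant N f T) : IsInvariant N (exactMul e f) T := by
  obtain ⟨w, hw, h⟩ := h
  obtain ⟨v, hv, k⟩ := k
  exact ⟨w * v, mul_mem_atkinLehnerCoset he0 he hf hw hv, fun τ => by rw [mul_smul, h, k]⟩

lemma IsInvariant.smul_eq (h : IsInvariant N e T) (he0 : 0 < e) (he : e ∣ N)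
    (hT : ∀ g ∈ atkinLehnerCoset N 1, ∀ τ, T (g • τ) = T τ) (hg : g ∈ atkinLehnerCoset N e)
    (τ : ℍ) : T (g • τ) = T τ := by
  obtain ⟨w, hw, h⟩ := h
  have hmem := mul_mem_atkinLehnerCoset he0 he he hg (inv_mem_atkinLehnerCoset hw)
  rw [exactMul_self he0] at hmem
  rw [← h τ, ← hT _ hmem (w • τ), mul_smul, inv_smul_smul]

lemma smul_vadd_eq_of_Gamma0 (hT : ∀ g ∈ CongruenceSubgroup.Gamma0 N, ∀ τ, T (g • τ) = T τ)
    (g : SL(2, ℤ)) (z : ℍ) : T (g • ((N : ℝ) +ᵥ z)) = T (g • z) := by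
  have hmem : g * ModularGroup.T ^ (N : ℤ) * g⁻¹ ∈ CongruenceSubgroup.Gamma N :=
    (CongruenceSubgroup.Gamma_normal N).conj_mem _
      (CongruenceSubgroup.ModularGroup_T_pow_mem_Gamma N N dvd_rfl) g
  have hshift := modular_T_zpow_smul z N
  rw [Int.cast_natCast] at hshift
  have hmem₀ := CongruenceSubgroup.Gamma0_mem.mpr (CongruenceSubgroup.Gamma_mem.mp hmem).2.2.1
  rw [← hshift, ← hT _ hmem₀ (g • z), smul_smul, smul_smul, inv_mul_cancel_right]

lemma periodic_comp_ofComplex {h : ℝ} (hper : ∀ z : ℍ, T (h +ᵥ z) = T z) :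
    Function.Periodic (T ∘ ofComplex) h := by
  intro w
  by_cases hw : 0 < w.im
  · have hw' : 0 < (w + h).im := by simpa using hw
    simp only [Function.comp_apply, ofComplex_apply_of_im_pos hw, ofComplex_apply_of_im_pos hw']
    rw [← hper ⟨w, hw⟩]
    congr 1
    ext
    simp [add_comm]
  · have hw' : ¬ 0 < (w + h).im := by simpa using hw
    simp only [Function.comp_apply]
    rw [ofComplex_apply_of_im_nonpos (not_lt.mp hw), ofComplex_apply_of_im_nonpos (not_lt.mp hw')]

lemma exists_tendsto_of_periodic {h : ℝ} (hh : 0 < h) (hper : ∀ z : ℍ, T (h +ᵥ z) = T z)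
    (hT : MDifferentiable 𝓘(ℂ) 𝓘(ℂ) T) (hbdd : IsBoundedAtImInfty T) :
    ∃ t, Tendsto T atImInfty (𝓝 t) := by
  have hpos : ∀ᶠ z in comap Complex.im atTop, 0 < z.im :=
    tendsto_comap.eventually (eventually_gt_atTop 0)
  have hlim := Function.Periodic.tendsto_at_I_inf hh (periodic_comp_ofComplex hper)
    (hpos.mono fun z hz => (analyticOnNhd_comp_ofComplex hT z hz).differentiableAt)
    (hbdd.comp_tendsto tendsto_comap_im_ofComplex)
  exact ⟨_, (hlim.comp tendsto_coe_atImInfty).congr fun z => by simp⟩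

end Functions

section EtaProducts

variable {P : List (ℕ × ℤ)} {N e : ℕ} {a b c d : ℤ} {w : SL(2, ℝ)}

/-- The function `1/η_P` on the upper half-plane. -/
def etaInv (P : List (ℕ × ℤ)) : ℍ → ℂ := fun τ => (etaFrame P τ)⁻¹

lemma etaInv_ne_zero (hP : ∀ p ∈ P, 0 < p.1) (τ : ℍ) : etaInv P τ ≠ 0 :=
  inv_ne_zero (etaFrame_ne_zero hP τ.im_pos)

lemma etaInv_smul (hP : IsLevel N P) (hw : w ∈ atkinLehnerCoset N 1) (τ : ℍ) :
    etaInv P (w • τ) = etaInv P τ := by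
  obtain ⟨a, b, c, d, hw⟩ := hw
  have hdet := hw.det_eq one_pos (one_dvd N)
  rw [Nat.div_one, Nat.cast_one, mul_one, mul_assoc b] at hdet
  rw [etaInv, etaInv, hw.coe_smul one_pos, ← etaFrame_smul hP hdet τ.im_pos]
  push_cast
  rw [mul_one, mul_one]

lemma etaHeight_natCast_mul_smul (hw : IsAtkinLehner N e a b c d w) (he0 : 0 < e) (he : e ∣ N)
    {n : ℕ} (hn0 : 0 < n) (hn : n ∣ N) (τ : ℍ) :
    etaHeight (n * (w • τ : ℍ)) = etaHeight (exactMul n e * τ) := by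
  have hdet := hw.det_eq he0 he
  rw [hw.coe_smul he0]
  obtain ⟨r, n₁, e₁, m, hr, rfl, rfl, rfl, hmul⟩ := exists_eq_mul_and_exactMul_eq hn0 hn he
  have hdiv : r * n₁ * e₁ * m / (e₁ * r) = n₁ * m :=
    Nat.div_eq_of_eq_mul_left he0 (by ring)
  rw [hdiv] at hdet
  push_cast at hdet
  let γ : SL(2, ℤ) := ⟨!![a * r, n₁ * b; c * m, d * e₁], by
    rw [Matrix.det_fin_two_of, ← hdet]
    ring⟩
  have hne₁ : 0 < n₁ * e₁ :=
    Nat.mul_pos (Nat.pos_of_mul_pos_right hn0) (Nat.pos_of_mul_pos_right he0)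
  have hsmul := etaHeight_smul γ ⟨(n₁ * e₁ : ℕ) * τ, im_natCast_mul_pos hne₁ τ.im_pos⟩
  have hr0 : (r : ℂ) ≠ 0 := by exact_mod_cast hr.ne'
  rw [hmul, ← hsmul, coe_smul_int, mul_div_assoc']
  symm
  rw [← mul_div_mul_left _ _ hr0]
  simp only [γ, Matrix.of_apply, Matrix.cons_val', Matrix.cons_val_zero, Matrix.cons_val_one,
    Matrix.cons_val_fin_one]
  push_cast
  congr 2 <;> ring

lemma frameProd_etaHeight (hw : frameSum P (1 : ℕ → ℤ) = 0) {τ : ℂ} (hτ : 0 < τ.im) :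
    frameProd P (fun n => etaHeight (n * τ)) =
      ‖etaFrame P τ‖ ^ 4 * frameProd P fun n => (n : ℝ) := by
  have heta (n : ℕ) : etaHeight (n * τ) = ‖dedekindEta (n * τ)‖ ^ 4 * (n * τ.im) := by
    rw [etaHeight, ← Complex.ofReal_natCast, Complex.im_ofReal_mul]
  simp only [heta, frameProd_mul, frameProd_pow]
  rw [frameProd_const hτ.ne' P, hw, zpow_zero, mul_one, etaFrame_eq_frameProd, norm_frameProd]

lemma norm_etaFrame_smul (hP : IsLevel N P) (he0 : 0 < e) (he : e ∣ N)
    (hperm : (P.map fun p => (exactMul p.1 e, p.2)).Perm P)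
    (hw : IsAtkinLehner N e a b c d w) (τ : ℍ) :
    ‖etaFrame P (w • τ : ℍ)‖ = ‖etaFrame P τ‖ := by
  have hprod : frameProd P (fun n => etaHeight (n * (w • τ : ℍ))) =
      frameProd P fun n => etaHeight (n * τ) := by
    rw [frameProd_congr (g := fun n => etaHeight (exactMul n e * τ)) fun p hp =>
      etaHeight_natCast_mul_smul hw he0 he (hP.pos p hp) (hP.dvd p hp) τ]
    have := (hperm.map fun p => etaHeight (p.1 * τ) ^ p.2).prod_eq
    rwa [List.map_map] at this
  rw [frameProd_etaHeight hP.weight (w • τ).im_pos, frameProd_etaHeight hP.weight τ.im_pos] at hprod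
  have hne : frameProd P (fun n => (n : ℝ)) ≠ 0 :=
    frameProd_ne_zero fun p hp => Nat.cast_ne_zero.mpr (hP.pos p hp).ne'
  exact (pow_left_inj₀ (norm_nonneg _) (norm_nonneg _) four_ne_zero).mp
    (mul_right_cancel₀ hne hprod)

lemma exists_etaInv_smul_eq_mul (hP : IsLevel N P) (he0 : 0 < e) (he : e ∣ N)
    (hperm : (P.map fun p => (exactMul p.1 e, p.2)).Perm P) (hw : IsAtkinLehner N e a b c d w) :
    ∃ χ : ℂ, ∀ τ : ℍ, etaInv P (w • τ) = χ * etaInv P τ :=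
  have hT := mdifferentiable_etaFrame_inv hP.pos
  exists_eq_const_mul_of_norm_eq (mdifferentiable_comp_smul hT w) hT (etaInv_ne_zero hP.pos)
    fun τ => by rw [etaInv, etaInv, norm_inv, norm_inv, norm_etaFrame_smul hP he0 he hperm hw]

/-- An elliptic involution has a fixed point, so its multiplier is trivial. -/
lemma isInvariant_etaInv_of_trace_eq_zero (hP : IsLevel N P) (hN : 0 < N) (he0 : 0 < e)
    (he : e ∣ N) (hperm : (P.map fun p => (exactMul p.1 e, p.2)).Perm P) (hc : 0 < c)
    (hdet : a * -a * e - b * c * (N / e : ℕ) = 1) : IsInvariant N e (etaInv P) := by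
  obtain ⟨w, hw⟩ := exists_isAtkinLehner he0 he hdet
  obtain ⟨χ, hχ⟩ := exists_etaInv_smul_eq_mul hP he0 he hperm hw
  have hs := sqrt_natCast_pos he0
  have htrace : w 1 1 = -w 0 0 := mul_left_cancel₀ hs.ne' (by
    rw [hw.apply_one_one, mul_neg, hw.apply_zero_zero]
    push_cast
    ring)
  have hpos : 0 < w 1 0 :=
    pos_of_mul_pos_right (a := √(e : ℝ)) (by rw [hw.apply_one_zero]; positivity) hs.le
  obtain ⟨τ, hτ⟩ := exists_smul_eq_self htrace hpos
  have hone : χ = 1 := eq_one_of_smul_eq_self hχ hτ (etaInv_ne_zero hP.pos τ)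
  exact ⟨w, ⟨_, _, _, _, hw⟩, fun τ => by rw [hχ, hone, one_mul]⟩

lemma isInvariant_etaInv_of_odd {n : ℕ} (hP : IsLevel (2 * n) P) (hn : Odd n)
    (hperm : (P.map fun p => (exactMul p.1 n, p.2)).Perm P) :
    IsInvariant (2 * n) n (etaInv P) := by
  obtain ⟨k, rfl⟩ := hn
  refine isInvariant_etaInv_of_trace_eq_zero hP (by lia) (by lia) (Dvd.intro_left 2 rfl)
    hperm (a := 1) (b := -1) (c := k + 1) (by lia) ?_
  rw [Nat.mul_div_cancel _ (by lia)]
  push_cast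
  ring

lemma isInvariant_etaInv_thirty_six (hP : IsLevel 30 P)
    (hperm : (P.map fun p => (exactMul p.1 6, p.2)).Perm P) : IsInvariant 30 6 (etaInv P) :=
  isInvariant_etaInv_of_trace_eq_zero hP (by norm_num) (by norm_num) (by norm_num) hperm
    (a := 2) (b := -5) (c := 1) (by norm_num) (by norm_num)

lemma isInvariant_etaInv_thirty_fifteen (hP : IsLevel 30 P)
    (hperm : (P.map fun p => (exactMul p.1 15, p.2)).Perm P) : IsInvariant 30 15 (etaInv P) :=
  isInvariant_etaInv_of_trace_eq_zero hP (by norm_num) (by norm_num) (by norm_num) hperm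
    (a := 1) (b := -8) (c := 1) (by norm_num) (by norm_num)

/-- For `g` in `SL₂(ℤ)` with lower left entry `c` and `gcd(c, N) = m`, this is `24N` times the
exponent of the leading power of `e2 z` in `η_P(g z)`. -/
def cuspOrder (N : ℕ) (P : List (ℕ × ℤ)) (m : ℕ) : ℤ :=
  frameSum P fun n => ((m.gcd n ^ 2 * (N / n) : ℕ) : ℤ)

lemma natCast_mul_frameSum_eq_cuspOrder (hP : IsLevel N P) (c : ℤ) :
    (N : ℝ) * frameSum P (fun n => (c.gcd n : ℝ) ^ 2 / n) = cuspOrder N P (c.gcd N) := by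
  rw [cuspOrder, intCast_frameSum, ← frameSum_mul_left]
  refine frameSum_congr (f := fun n => (N : ℝ) * ((c.gcd n : ℝ) ^ 2 / n))
    (g := fun n => ((((c.gcd N).gcd n ^ 2 * (N / n) : ℕ) : ℤ) : ℝ)) fun p hp => ?_
  have hgcd : (c.gcd N).gcd p.1 = c.gcd p.1 := by
    rw [Int.gcd_eq_natAbs, Int.gcd_eq_natAbs, Nat.gcd_assoc, Int.natAbs_natCast,
      Int.natAbs_natCast, Nat.gcd_eq_right (hP.dvd p hp)]
  have hp0 : (p.1 : ℝ) ≠ 0 := Nat.cast_ne_zero.mpr (hP.pos p hp).ne'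
  rw [hgcd, Int.cast_natCast, Nat.cast_mul, Nat.cast_div (hP.dvd p hp) hp0]
  push_cast
  ring

lemma exists_tendsto_etaInv_smul (hP : IsLevel N P) (hN : 0 < N) (g : SL(2, ℤ))
    (hg : cuspOrder N P ((g 1 0).gcd N) ≤ 0) :
    ∃ t : ℂ, Tendsto (fun z : ℍ => etaInv P (g • z)) atImInfty (𝓝 t) := by
  have hNR : (0 : ℝ) < N := Nat.cast_pos.mpr hN
  have hGamma0 (γ : SL(2, ℤ)) (hγ : γ ∈ CongruenceSubgroup.Gamma0 N) (τ : ℍ) :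
      etaInv P (γ • τ) = etaInv P τ := by
    rw [← map_smul, etaInv_smul hP (map_mem_atkinLehnerCoset_one hγ)]
  have hholo := mdifferentiable_comp_smul (mdifferentiable_etaFrame_inv hP.pos)
    (Matrix.SpecialLinearGroup.map (Int.castRingHom ℝ) g)
  simp only [map_smul] at hholo
  refine exists_tendsto_of_periodic hNR (smul_vadd_eq_of_Gamma0 hGamma0 g) hholo
    (isBoundedAtImInfty_etaFrame_inv_smul g hP.pos hP.weight ?_)
  refine nonpos_of_mul_nonpos_right ?_ hNR
  rw [natCast_mul_frameSum_eq_cuspOrder hP]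
  exact_mod_cast hg

lemma ne_zero_of_tendsto_etaInv_smul (hP : IsLevel N P) (hN : 0 < N) {g : SL(2, ℤ)}
    (hg : cuspOrder N P ((g 1 0).gcd N) = 0) {L : ℂ}
    (hL : Tendsto (fun z : ℍ => etaInv P (g • z)) atImInfty (𝓝 L)) : L ≠ 0 := by
  obtain ⟨C, hC, h⟩ := exists_tendsto_norm_etaFrame_smul g hP.pos hP.weight
  have hsum := natCast_mul_frameSum_eq_cuspOrder hP (g 1 0)
  rw [hg, Int.cast_zero, mul_eq_zero_iff_left (Nat.cast_ne_zero.mpr hN.ne')] at hsum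
  simp only [hsum, mul_zero, Real.exp_zero, mul_one] at h
  have hlim : ‖L‖ ^ 4 = C⁻¹ := tendsto_nhds_unique ((hL.norm.pow 4).congr fun z => by
    rw [etaInv, norm_inv, inv_pow]) (h.inv₀ hC)
  rintro rfl
  simp [eq_comm, hC] at hlim

lemma isInvariant_etaInv_twelve_four (hP : IsLevel 12 P)
    (hperm : (P.map fun p => (exactMul p.1 4, p.2)).Perm P) (h0 : cuspOrder 12 P 2 = 0) :
    IsInvariant 12 4 (etaInv P) := by
  obtain ⟨w, hw⟩ := exists_isAtkinLehner (N := 12) (e := 4) (a := 2) (b := -3) (c := 1) (d := -1)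
    (by norm_num) (by norm_num) (by norm_num)
  obtain ⟨χ, hχ⟩ := exists_etaInv_smul_eq_mul hP (by norm_num) (by norm_num) hperm hw
  let γ : SL(2, ℤ) := ⟨!![1, 0; 2, 1], by simp⟩
  have hγ : (γ 1 0).gcd (12 : ℕ) = 2 := by decide
  obtain ⟨L, hL⟩ := exists_tendsto_etaInv_smul hP (by norm_num) γ (by rw [hγ, h0])
  have hL0 := ne_zero_of_tendsto_etaInv_smul hP (by norm_num) (by rw [hγ, h0]) hL
  have hparabolic (z : ℍ) : w • γ • z = γ • ((-3 / 2 : ℝ) +ᵥ z) := by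
    have hden : (2 * z + 1 : ℂ) ≠ 0 := ne_zero_of_im_pos (by simpa using z.im_pos)
    ext
    rw [hw.coe_smul (by norm_num), coe_smul_int, coe_smul_int]
    simp only [γ, coe_vadd, Matrix.of_apply, Matrix.cons_val', Matrix.cons_val_zero,
      Matrix.cons_val_one, Matrix.cons_val_fin_one]
    push_cast
    rw [mul_div_assoc', mul_div_assoc', div_add' _ _ _ (by simpa using hden),
      div_add' _ _ _ (by simpa using hden), div_div_div_cancel_right₀ (by simpa using hden),
      ← mul_div_mul_left (1 * _ + 0 : ℂ) _ two_ne_zero]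
    congr 1 <;> ring
  have hone : χ = 1 := eq_one_of_smul_eq_smul_vadd hχ hparabolic hL0 hL
  exact ⟨w, ⟨_, _, _, _, hw⟩, fun τ => by rw [hχ, hone, one_mul]⟩

end EtaProducts

/-! ### Existence and uniqueness of the principal modulus -/

section PrincipalModulus

variable {P : List (ℕ × ℤ)} {N d : ℕ} {S : Set ℕ} {T T' : ℍ → ℂ}

theorem isPrincipalModulus_etaInv (hP : IsLevel N P) (hS : IsExactDivisorGroup N S)
    (hsum : frameSum P ((↑) : ℕ → ℤ) = 24) (hinv : ∀ e ∈ S, IsInvariant N e (etaInv P))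
    (hcusp : ∀ m, m ∣ N → cuspOrder N P m ≤ 0 ∨ ∃ e ∈ S, m * e = N) :
    IsPrincipalModulus (GammaPlus N S) (etaInv P) := by
  have : NeZero N := ⟨hS.pos.ne'⟩
  have hseries : HasPoleSeries (etaInv P) (frameSeries P) := hasPoleSeries_etaFrame_inv hP.pos hsum
  have hΓ : ∀ γ ∈ gammaPlus hS, ∀ τ, etaInv P (γ • τ) = etaInv P τ := fun γ hγ τ => by
    obtain ⟨e, he, hγ⟩ := (mem_GammaPlus_iff hS).mp hγ
    exact (hinv e he).smul_eq (hS.pos_of_mem he) (hS.dvd e he) (fun _ => etaInv_smul hP) hγ τ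
  obtain ⟨Y, hY⟩ := hseries.exists_forall_lt_im_eq_add_intCast
  refine isPrincipalModulus_of_injective_at_infty (Γ := gammaPlus hS) (isClosed_GammaPlus hS)
    (mdifferentiable_etaFrame_inv hP.pos) hΓ (isCuspCover_gammaPlus hS) (fun i => ?_)
    hseries.tendsto_cocompact ⟨Y, fun x y hx hy hxy => ?_⟩
  · exact (hcusp _ (Int.natCast_dvd_natCast.mp (Int.gcd_dvd_right _ _))).imp
      (exists_tendsto_etaInv_smul hP hS.pos i.out⁻¹)
      fun ⟨e, he, h⟩ => exists_tendsto_orbitRel_of_gcd_mul_eq hS he i.out⁻¹ h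
  · obtain ⟨n, hn⟩ := hY x y hx hy hxy
    exact orbitRel_of_eq_add_intCast hS hn

lemma tendsto_of_hasOqExpansion (h : HasOqExpansion d T) :
    Tendsto (fun τ : ℍ => T τ - (e2 τ)⁻¹ + d) atImInfty (𝓝 0) := by
  have hlim : Tendsto (fun τ : ℍ => ((T τ - e2 (-(τ : ℂ)) + d) * e2 (-(τ : ℂ))) * e2 τ)
      atImInfty (𝓝 0) :=
    (Asymptotics.IsBigO.mul h (Asymptotics.isBigO_refl (fun τ : ℍ => e2 τ)
      atImInfty).norm_right).trans_tendsto (by simpa using tendsto_e2_atImInfty.norm)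
  refine hlim.congr fun τ => ?_
  rw [e2_neg, mul_assoc, inv_mul_cancel₀ (e2_ne_zero _), mul_one]

lemma tendsto_e2_mul_of_hasOqExpansion (h : HasOqExpansion d T) :
    Tendsto (fun τ : ℍ => e2 τ * T τ) atImInfty (𝓝 1) := by
  have hlim := (tendsto_e2_atImInfty.mul (tendsto_of_hasOqExpansion h)).add
    ((tendsto_e2_atImInfty.mul_const (d : ℂ)).const_sub 1)
  simp only [zero_mul, mul_zero, zero_add, sub_zero] at hlim
  refine hlim.congr fun τ => ?_
  have := e2_ne_zero τ
  field_simp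
  ring

lemma exists_hasPoleSeries_of_tendsto (hT : MDifferentiable 𝓘(ℂ) 𝓘(ℂ) T)
    (hper : ∀ τ : ℍ, T ((1 : ℝ) +ᵥ τ) = T τ)
    (hlim : Tendsto (fun τ : ℍ => e2 τ * T τ) atImInfty (𝓝 1)) : ∃ Φ, HasPoleSeries T Φ := by
  let F : ℍ → ℂ := fun τ => e2 τ * T τ
  have hF : MDifferentiable 𝓘(ℂ) 𝓘(ℂ) F := by
    rw [UpperHalfPlane.mdifferentiable_iff] at hT ⊢
    refine (differentiable_e2.differentiableOn.mul hT).congr fun z hz => ?_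
    simp [F, ofComplex_apply_of_im_pos hz]
  have hperF (τ : ℍ) : F ((1 : ℝ) +ᵥ τ) = F τ := by
    simp only [F, hper, coe_vadd]
    rw [add_comm, Complex.ofReal_one, ← Int.cast_one (R := ℂ), e2_add_intCast]
  have hana : AnalyticAt ℂ (cuspFunction 1 F) 0 :=
    analyticAt_cuspFunction_zero one_pos (periodic_comp_ofComplex hperF) hF (hlim.isBigO_one ℝ)
  have heq (τ : ℍ) : cuspFunction 1 F (e2 τ) = F τ := by
    rw [e2_eq_qParam, eq_cuspFunction τ one_ne_zero (periodic_comp_ofComplex hperF)]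
  refine ⟨cuspFunction 1 F, hana, tendsto_nhds_unique
    ((hana.continuousAt.tendsto.comp tendsto_e2_atImInfty).congr heq) hlim, fun τ => ?_⟩
  rw [heq, inv_mul_cancel_left₀ (e2_ne_zero _)]

lemma exists_eq_const_of_norm_le {Γ : Subgroup SL(2, ℤ)} [Γ.FiniteIndex] {f : ℍ → ℂ}
    (hf : MDifferentiable 𝓘(ℂ) 𝓘(ℂ) f) (hinv : ∀ γ ∈ Γ, ∀ τ, f (γ • τ) = f τ)
    {C : ℝ} (hC : ∀ τ, ‖f τ‖ ≤ C) : ∃ c, ∀ τ, f τ = c := by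
  let F : ModularForm (Γ.map (Matrix.SpecialLinearGroup.mapGL ℝ)) 0 :=
    { toFun := f
      slash_action_eq' := by
        rintro _ ⟨γ, hγ, rfl⟩
        ext τ
        simpa [ModularForm.slash_def, UpperHalfPlane.σ] using! hinv γ hγ τ
      holo' := hf
      bdd_at_cusps' := fun _ g _ => by
        refine isBoundedAtImInfty_iff.mpr ⟨C * |g.det.val|⁻¹, 0, fun z _ => ?_⟩
        simpa [ModularForm.slash_def] using
          mul_le_mul_of_nonneg_right (hC (g • z)) (by positivity) }
  obtain ⟨c, hc⟩ := ModularForm.eq_const_of_weight_zero F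
  exact ⟨c, congrFun hc⟩

/-- Near `i∞` a principal modulus takes every large value, so it takes none elsewhere. -/
lemma exists_norm_le_of_forall_im_smul_le {Γ : Set SL(2, ℝ)} {Φ : ℂ → ℂ}
    (hT : IsPrincipalModulus Γ T) (hΦ : HasPoleSeries T Φ) (Y : ℝ) :
    ∃ C : ℝ, ∀ τ : ℍ, (∀ γ ∈ Γ, (γ • τ).im ≤ Y) → ‖T τ‖ ≤ C := by
  have h := hΦ.eventually_exists_lt_im_eq Y
  rw [← Metric.cobounded_eq_cocompact, ← comap_norm_atTop, eventually_comap] at h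
  obtain ⟨C, hC⟩ := eventually_atTop.mp h
  refine ⟨C, fun τ hτ => le_of_not_ge fun hlt => ?_⟩
  obtain ⟨σ, hσ, hTσ⟩ := hC _ hlt (T τ) rfl
  obtain ⟨γ, hγ, rfl⟩ := hT.2.2.1 τ σ hTσ.symm
  exact (hτ γ hγ).not_gt hσ

lemma IsExactDivisorGroup.exists_hasPoleSeries (hS : IsExactDivisorGroup N S)
    (hT : IsPrincipalModulus (GammaPlus N S) T) (hd : HasOqExpansion d T) :
    ∃ Φ, HasPoleSeries T Φ := by
  refine exists_hasPoleSeries_of_tendsto hT.1 (fun τ => ?_) (tendsto_e2_mul_of_hasOqExpansion hd)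
  obtain ⟨γ, hγ, h⟩ := orbitRel_iff.mp (orbitRel_of_eq_add_intCast hS (x := (1 : ℝ) +ᵥ τ) (y := τ)
    (n := 1) (by simp [add_comm]))
  rw [← hT.2.1 γ hγ, h]

/-- The difference of two such functions is holomorphic on `ℍ`, and it is bounded because both
poles at `i∞` have the same principal part; hence it is constant. -/
theorem eq_of_isPrincipalModulus_of_hasOqExpansion (hS : IsExactDivisorGroup N S)
    (hT : IsPrincipalModulus (GammaPlus N S) T) (hd : HasOqExpansion d T)
    (hT' : IsPrincipalModulus (GammaPlus N S) T') (hd' : HasOqExpansion d T') : T' = T := by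
  have : NeZero N := ⟨hS.pos.ne'⟩
  obtain ⟨Φ, hΦ⟩ := hS.exists_hasPoleSeries hT hd
  obtain ⟨Φ', hΦ'⟩ := hS.exists_hasPoleSeries hT' hd'
  have hlim : Tendsto (T' - T) atImInfty (𝓝 0) := by
    have hsub := (tendsto_of_hasOqExpansion hd').sub (tendsto_of_hasOqExpansion hd)
    rw [sub_zero] at hsub
    exact hsub.congr fun τ => by rw [Pi.sub_apply]; ring
  have hinv : ∀ γ ∈ GammaPlus N S, ∀ τ : ℍ, (T' - T) (γ • τ) = (T' - T) τ := fun γ hγ τ => by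
    rw [Pi.sub_apply, Pi.sub_apply, hT.2.1 γ hγ, hT'.2.1 γ hγ]
  obtain ⟨B, Y, hY⟩ := isBoundedAtImInfty_iff.mp (hlim.isBigO_one ℝ)
  obtain ⟨C, hC⟩ := exists_norm_le_of_forall_im_smul_le hT hΦ Y
  obtain ⟨C', hC'⟩ := exists_norm_le_of_forall_im_smul_le hT' hΦ' Y
  have hbdd (τ : ℍ) : ‖(T' - T) τ‖ ≤ max B (C' + C) := by
    by_cases! h : ∃ γ ∈ GammaPlus N S, Y < (γ • τ).im
    · obtain ⟨γ, hγ, hlt⟩ := h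
      rw [← hinv γ hγ τ]
      exact (hY _ hlt.le).trans (le_max_left _ _)
    · exact (norm_sub_le _ _).trans ((add_le_add (hC' τ h) (hC τ h)).trans (le_max_right _ _))
  obtain ⟨c, hc⟩ := exists_eq_const_of_norm_le (Γ := CongruenceSubgroup.Gamma0 N)
    (hT'.1.sub hT.1) (fun γ hγ τ => map_smul γ τ ▸ hinv _ (map_mem_gammaPlus hS hγ) τ) hbdd
  have hc0 : c = 0 := tendsto_nhds_unique (tendsto_const_nhds.congr fun τ => (hc τ).symm) hlim
  exact funext fun τ => sub_eq_zero.mp ((hc τ).trans hc0)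

end PrincipalModulus

/-! ### The Niemeier root systems -/

section RootSystems

variable {X : List ADE}

/-- The exact divisors of the Coxeter number which define `Γ^X`. -/
def divisorsX (X : List ADE) : List ℕ :=
  if X.any ADE.isA then [1]
  else if X.any ADE.isD then [1, coxOf X / 2]
  else if X.any ADE.isE6 then [1, 4]
  else [1, 6, 10, 15]

/-- The numerical conditions on a frame shape `P` which, together with the triviality of its
Atkin-Lehner multipliers, make `1/η_P` a principal modulus for `Γ₀(N)+S` with constant term `-d`.
They are stated over lists so as to be decidable. -/
structure IsAdmissible (N : ℕ) (S : List ℕ) (P : List (ℕ × ℤ)) (d : ℕ) : Prop where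
  pos : 0 < N
  one_mem : 1 ∈ S
  exact_divisor : ∀ e ∈ S, e ∣ N ∧ e.Coprime (N / e)
  mul_mem : ∀ e ∈ S, ∀ f ∈ S, exactMul e f ∈ S
  pos_and_dvd : ∀ p ∈ P, 0 < p.1 ∧ p.1 ∣ N
  weight : frameSum P (1 : ℕ → ℤ) = 0
  order_infty : frameSum P ((↑) : ℕ → ℤ) = 24
  order_zero : 24 ∣ frameSum P fun n => ((N / n : ℕ) : ℤ)
  square : IsSquare (P.map fun p => p.1 ^ p.2.natAbs).prod
  cusp : ∀ m ∈ List.range (N + 1), m ∣ N → cuspOrder N P m ≤ 0 ∨ ∃ e ∈ S, m * e = N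
  perm : ∀ e ∈ S, (P.map fun p => (exactMul p.1 e, p.2)).Perm P
  constant : (frameSum P fun n => if n = 1 then 1 else 0 : ℤ) = -d

lemma isAdmissible_of_mem (hX : X ∈ NiemeierRootSystems) :
    IsAdmissible (coxOf X) (divisorsX X) (frameOf X) X.length := by
  constructor <;> revert X <;> decide +kernel

namespace IsAdmissible

variable {N d : ℕ} {S : List ℕ} {P : List (ℕ × ℤ)}

lemma isLevel (h : IsAdmissible N S P d) : IsLevel N P where
  pos p hp := (h.pos_and_dvd p hp).1
  dvd p hp := (h.pos_and_dvd p hp).2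
  weight := h.weight
  order_infty := by rw [h.order_infty]
  order_zero := h.order_zero
  square := h.square

lemma isExactDivisorGroup (h : IsAdmissible N S P d) : IsExactDivisorGroup N {e | e ∈ S} where
  pos := h.pos
  one_mem := h.one_mem
  dvd e he := (h.exact_divisor e he).1
  coprime e he := (h.exact_divisor e he).2
  mul_mem := h.mul_mem

lemma isPrincipalModulus (h : IsAdmissible N S P d)
    (hinv : ∀ e ∈ S, IsInvariant N e (etaInv P)) :
    IsPrincipalModulus (GammaPlus N {e | e ∈ S}) (etaInv P) :=
  isPrincipalModulus_etaInv h.isLevel h.isExactDivisorGroup h.order_infty hinv fun m hm =>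
    h.cusp m (List.mem_range.mpr (Nat.lt_succ_of_le (Nat.le_of_dvd h.pos hm))) hm

lemma hasOqExpansion (h : IsAdmissible N S P d) : HasOqExpansion d (etaInv P) := by
  refine (hasPoleSeries_etaFrame_inv h.isLevel.pos h.order_infty).hasOqExpansion ?_
  rw [deriv_frameSeries h.isLevel.pos, h.constant]
  simp

end IsAdmissible

lemma coxOf_of_isD (hX : X ∈ NiemeierRootSystems) (hA : ¬ X.any ADE.isA) (hD : X.any ADE.isD) :
    coxOf X = 2 * (coxOf X / 2) ∧ Odd (coxOf X / 2) := by
  revert X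
  decide +kernel

lemma coxOf_of_isE6 (hX : X ∈ NiemeierRootSystems) (hA : ¬ X.any ADE.isA) (hD : ¬ X.any ADE.isD)
    (hE : X.any ADE.isE6) : coxOf X = 12 ∧ cuspOrder 12 (frameOf X) 2 = 0 := by
  revert X
  decide +kernel

lemma coxOf_of_not_isE6 (hX : X ∈ NiemeierRootSystems) (hA : ¬ X.any ADE.isA)
    (hD : ¬ X.any ADE.isD) (hE : ¬ X.any ADE.isE6) : coxOf X = 30 := by
  revert X
  decide +kernel

lemma GammaX_eq (hX : X ∈ NiemeierRootSystems) :
    GammaX X = GammaPlus (coxOf X) {e | e ∈ divisorsX X} := by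
  rw [GammaX, divisorsX]
  split_ifs with hA hD hE
  · simp
  · congr
    ext
    simp
  · rw [(coxOf_of_isE6 hX hA hD hE).1]
    congr
    ext
    simp
  · rw [coxOf_of_not_isE6 hX hA hD hE]
    congr
    ext
    simp

lemma isInvariant_of_mem (hX : X ∈ NiemeierRootSystems) :
    ∀ e ∈ divisorsX X, IsInvariant (coxOf X) e (etaInv (frameOf X)) := by
  have h := isAdmissible_of_mem hX
  have hP := h.isLevel
  have hperm := h.perm
  rw [divisorsX] at hperm ⊢
  split_ifs at hperm ⊢ with hA hD hE
  · simpa using isInvariant_one _ _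
  · obtain ⟨h2, hodd⟩ := coxOf_of_isD hX hA hD
    have hhalf := hperm (coxOf X / 2) (by simp)
    generalize coxOf X / 2 = n at h2 hodd hhalf ⊢
    rw [h2] at hP ⊢
    simpa [isInvariant_one] using isInvariant_etaInv_of_odd hP hodd hhalf
  · obtain ⟨h12, h0⟩ := coxOf_of_isE6 hX hA hD hE
    rw [h12] at hP ⊢
    simpa [isInvariant_one] using isInvariant_etaInv_twelve_four hP (hperm 4 (by simp)) h0
  · rw [coxOf_of_not_isE6 hX hA hD hE] at hP ⊢
    have h6 := isInvariant_etaInv_thirty_six hP (hperm 6 (by simp))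
    have h15 := isInvariant_etaInv_thirty_fifteen hP (hperm 15 (by simp))
    have h10 : IsInvariant 30 10 (etaInv (frameOf X)) :=
      h6.mul (by norm_num) (by norm_num) (by norm_num) h15
    simpa [isInvariant_one] using ⟨h6, h10, h15⟩

end RootSystems

end Niemeier

/-- for each of the 23 Niemeier root systems `X`, the function
`T^X = 1/η_{π^X}` is the unique principal modulus for `Γ^X` satisfying
`T^X = q⁻¹ - d^X + O(q)` as `τ → i∞`, where `d^X` is the number of irreducible
components of `X`. -/
theorem statement0 (X : List ADE) (hX : X ∈ NiemeierRootSystems) :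
    (IsPrincipalModulus (GammaX X) (TX X) ∧ HasOqExpansion X.length (TX X)) ∧
    ∀ T' : UpperHalfPlane → ℂ, IsPrincipalModulus (GammaX X) T' →
      HasOqExpansion X.length T' → T' = TX X := by
  have h := Niemeier.isAdmissible_of_mem hX
  have hT := h.isPrincipalModulus (Niemeier.isInvariant_of_mem hX)
  rw [Niemeier.GammaX_eq hX]
  exact ⟨⟨hT, h.hasOqExpansion⟩, fun T' hT' hd' =>
    Niemeier.eq_of_isPrincipalModulus_of_hasOqExpansion h.isExactDivisorGroup hT h.hasOqExpansion
      hT' hd'⟩
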